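/- Let N ≥ 20 and let C = {x_1,…,x_M} ⊂ SO(3) be pairwise distinct points with min_{x_i ≠ x_j} ω(x_j⁻¹x_i) ≥ 36/(N+1). Then, taking s = 8 in the construction of the kernel σ_N, the 4M×4M interpolation matrix K is invertible; consequently, for every u ∈ {−1,1}^M there exist unique coefficients α = (α_0,α_1,α_2,α_3) with Kα = (u,0,0,0)ᵀ, i.e. the Hermite interpolation problem q(x_i) = u_i, X_1q(x_i) = X_2q(x_i) = X_3q(x_i) = 0 has a unique solution of the kernel-expansion form q(x) = Σ_{j=1}^M (α_{j,0}σ_N(x,x_j) + Σ_{k=1}^3 α_{j,k} X_k^y σ_N(x,x_j)). -/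

import Mathlib

noncomputable section

abbrev Mat3 := Matrix (Fin 3) (Fin 3) ℝ

/-- membership in SO(3) -/
def IsSO3 (x : Mat3) : Prop := x.transpose * x = 1 ∧ x.det = 1

/-- rotation angle -/
def rotAngle (x : Mat3) : ℝ := Real.arccos ((Matrix.trace x - 1) / 2)

/-- generators of so(3) -/
def Lgen : Fin 3 → Mat3 :=
  ![!![0, 0, 0; 0, 0, -1; 0, 1, 0],
    !![0, 0, 1; 0, 0, 0; -1, 0, 0],
    !![0, -1, 0; 1, 0, 0; 0, 0, 0]]

/-- derivative in the first variable along generator `i` -/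
def Xx (i : Fin 3) (f : Mat3 → Mat3 → ℝ) : Mat3 → Mat3 → ℝ :=
  fun x y => deriv (fun t : ℝ => f (x * NormedSpace.exp (t • Lgen i)) y) 0

/-- derivative in the second variable along generator `i` -/
def Xy (i : Fin 3) (f : Mat3 → Mat3 → ℝ) : Mat3 → Mat3 → ℝ :=
  fun x y => deriv (fun t : ℝ => f x (y * NormedSpace.exp (t • Lgen i))) 0

/-- iterated integrals of the sign of the Chebyshev polynomial: the perfect B-spline chain -/
def fspline (s : ℕ) : ℕ → ℝ → ℝ
  | 0 => fun x => (-1 : ℝ) ^ (s - 1) * Real.sign ((Polynomial.Chebyshev.U ℝ ((s : ℤ) - 1)).eval x)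
  | (k + 1) => fun x => ∫ t in (-1 : ℝ)..x, fspline s k t

/-- the scaled perfect B-spline g̃_{s-1} -/
def gtilde (s : ℕ) (x : ℝ) : ℝ := fspline s (s - 1) (2 * x)

/-- discrete norm ‖g̃‖_{1,N} -/
def gnorm (s N : ℕ) : ℝ :=
  ∑ k ∈ Finset.Icc (-(N : ℤ)) (N : ℤ), gtilde s ((k : ℝ) / (2 * ((N : ℝ) + 1)))

/-- the trigonometric kernel σ̃_N (real-valued) -/
def sigmaT (s N : ℕ) (t : ℝ) : ℝ :=
  ((1 / (gnorm s N : ℂ)) *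
      ∑ k ∈ Finset.Icc (-(N : ℤ)) (N : ℤ),
        (gtilde s ((k : ℝ) / (2 * ((N : ℝ) + 1))) : ℂ) * Complex.exp ((k : ℂ) * t * Complex.I)).re

/-- the zonal kernel σ_N on SO(3) -/
def sigmaK (s N : ℕ) (x y : Mat3) : ℝ := sigmaT s N (rotAngle (y⁻¹ * x))

/-- rotation axis components -/
def axisComp : Fin 3 → Mat3 → ℝ :=
  ![fun x => (x 2 1 - x 1 2) / (2 * Real.sin (rotAngle x)),
    fun x => (x 0 2 - x 2 0) / (2 * Real.sin (rotAngle x)),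
    fun x => (x 1 0 - x 0 1) / (2 * Real.sin (rotAngle x))]

/-- Levi-Civita symbol on `Fin 3` -/
def eps3 (a b c : Fin 3) : ℝ :=
  if (a, b, c) = (0, 1, 2) ∨ (a, b, c) = (1, 2, 0) ∨ (a, b, c) = (2, 0, 1) then 1
  else if (a, b, c) = (2, 1, 0) ∨ (a, b, c) = (1, 0, 2) ∨ (a, b, c) = (0, 2, 1) then -1
  else 0

/-- constants c_{l,s} -/
def cConst : ℕ → ℕ → ℝ
  | 0, s => 1.02 * (Nat.factorial (s - 1)) * 2 ^ s * s
  | 1, s => 1.02 * (Nat.factorial (s - 1)) * 2 ^ s * (2 * s)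
  | 2, s => 1.02 * (Nat.factorial (s - 1)) * 2 ^ s * (4 * s + 1)
  | _, s => 1.02 * (Nat.factorial (s - 1)) * 2 ^ s * (9 * s - 2)

/-- ζ(m) for natural m -/
def zetaNat (m : ℕ) : ℝ := ∑' n : ℕ, (1 : ℝ) / ((n : ℝ) + 1) ^ m

/-- constants C_{i,s} = 124 c_{i,s} ζ(s-2) -/
def CConst (i s : ℕ) : ℝ := 124 * cConst i s * zetaNat (s - 2)

end

open scoped Real

/-- block selector: 0 ↦ kernel, p ↦ derivative along generator p−1 -/
def toOp : Fin 4 → Option (Fin 3) := ![none, some 0, some 1, some 2]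

/-- the (p,q) block kernel of the interpolation matrix -/
noncomputable def Kblock (s N : ℕ) (p q : Fin 4) : Mat3 → Mat3 → ℝ :=
  match toOp p, toOp q with
  | none, none => sigmaK s N
  | none, some j => Xx j (sigmaK s N)
  | some i, none => Xy i (sigmaK s N)
  | some i, some j => Xx j (Xy i (sigmaK s N))

/-- the 4M × 4M interpolation matrix K -/
noncomputable def Kmat (s N : ℕ) {M : ℕ} (x : Fin M → Mat3) :
    Matrix (Fin 4 × Fin M) (Fin 4 × Fin M) ℝ :=
  Matrix.of fun pa qb => Kblock s N pa.1 qb.1 (x pa.2) (x qb.2)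

/-- right-hand side (u,0,0,0)ᵀ -/
def rhsVec {M : ℕ} (u : Fin M → ℝ) : Fin 4 × Fin M → ℝ :=
  fun pa => if pa.1 = 0 then u pa.2 else 0

open Finset in
/-- The exponential sum of the samples of `H` at `m` points of step `h` starting at `-1 + x`. -/
noncomputable def sampleSum (H : ℝ → ℝ) (m : ℕ) (h : ℝ) (z : ℂ) (x : ℝ) : ℂ :=
  ∑ i ∈ range m, (H (-1 + i * h + x) : ℂ) * z ^ i

/-- `H₁` is a primitive of `H₀` on `[-1, 1]`. -/
def IsPrimitive (H₁ H₀ : ℝ → ℝ) : Prop :=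
  IntervalIntegrable H₀ MeasureTheory.volume (-1) 1 ∧
    ∀ x ∈ Set.Icc (-1 : ℝ) 1, ∀ y ∈ Set.Icc (-1 : ℝ) 1, ∫ t in x..y, H₀ t = H₁ y - H₁ x

lemma sampleSum_shift (H : ℝ → ℝ) (m : ℕ) (h : ℝ) (z : ℂ) :
    z * sampleSum H m h z h =
      sampleSum H m h z 0 + H (-1 + m * h) * z ^ m - H (-1) := by
  have h1 := Finset.sum_range_succ' (fun i : ℕ => (H (-1 + i * h) : ℂ) * z ^ i) m
  have h2 := Finset.sum_range_succ (fun i : ℕ => (H (-1 + i * h) : ℂ) * z ^ i) m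
  have h3 : z * sampleSum H m h z h =
      ∑ i ∈ Finset.range m, (H (-1 + ((i + 1 : ℕ) : ℝ) * h) : ℂ) * z ^ (i + 1) := by
    rw [sampleSum, Finset.mul_sum]
    refine Finset.sum_congr rfl fun i _ => ?_
    have : -1 + (i : ℝ) * h + h = -1 + ((i + 1 : ℕ) : ℝ) * h := by push_cast; ring
    rw [this]; ring
  have h4 : sampleSum H m h z 0 = ∑ i ∈ Finset.range m, (H (-1 + (i : ℝ) * h) : ℂ) * z ^ i := by
    simp [sampleSum]
  rw [h3, h4]
  rw [h2] at h1
  simp only [Nat.cast_zero, zero_mul, add_zero, pow_zero, mul_one] at h1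
  linear_combination -h1

section grid

variable {m : ℕ} {h : ℝ}

lemma grid_mem (hm : m * h = 2) (hh : 0 ≤ h) {i : ℕ} (hi : i < m) {x : ℝ}
    (hx : x ∈ Set.Icc 0 h) : -1 + i * h + x ∈ Set.Icc (-1 : ℝ) 1 := by
  have h1 : ((i : ℝ) + 1) * h ≤ m * h :=
    mul_le_mul_of_nonneg_right (by exact_mod_cast hi) hh
  have h2 : 0 ≤ (i : ℝ) * h := by positivity
  constructor
  · linarith [hx.1]
  · nlinarith [hx.2]

lemma IsPrimitive.integrable_sub {H₁ H₀ : ℝ → ℝ} (hP : IsPrimitive H₁ H₀) {x y : ℝ}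
    (hx : x ∈ Set.Icc (-1 : ℝ) 1) (hy : y ∈ Set.Icc (-1 : ℝ) 1) :
    IntervalIntegrable H₀ MeasureTheory.volume x y := by
  refine hP.1.mono_set ?_
  rw [Set.uIcc_of_le (by norm_num : (-1 : ℝ) ≤ 1)]
  exact Set.uIcc_subset_Icc hx hy

lemma IsPrimitive.integrable_comp {H₁ H₀ : ℝ → ℝ} (hP : IsPrimitive H₁ H₀)
    (hm : m * h = 2) (hh : 0 ≤ h) {i : ℕ} (hi : i < m) {x y : ℝ}
    (hx : x ∈ Set.Icc 0 h) (hy : y ∈ Set.Icc 0 h) :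
    IntervalIntegrable (fun s => (H₀ (-1 + i * h + s) : ℂ)) MeasureTheory.volume x y := by
  have := (hP.integrable_sub (grid_mem hm hh hi hx) (grid_mem hm hh hi hy)).comp_add_left
    (-1 + i * h)
  simp only [add_sub_cancel_left] at this
  exact ⟨this.1.ofReal, this.2.ofReal⟩

lemma sampleSum_integrable {H₁ H₀ : ℝ → ℝ} (hP : IsPrimitive H₁ H₀)
    (hm : m * h = 2) (hh : 0 ≤ h) (z : ℂ) {x y : ℝ}
    (hx : x ∈ Set.Icc 0 h) (hy : y ∈ Set.Icc 0 h) :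
    IntervalIntegrable (sampleSum H₀ m h z) MeasureTheory.volume x y := by
  have := IntervalIntegrable.sum _ fun i hi =>
    (hP.integrable_comp hm hh (Finset.mem_range.1 hi) hx hy).mul_const (z ^ i)
  rwa [Finset.sum_fn] at this

lemma sampleSum_integral {H₁ H₀ : ℝ → ℝ} (hP : IsPrimitive H₁ H₀)
    (hm : m * h = 2) (hh : 0 ≤ h) (z : ℂ) {x y : ℝ}
    (hx : x ∈ Set.Icc 0 h) (hy : y ∈ Set.Icc 0 h) :
    ∫ s in x..y, sampleSum H₀ m h z s = sampleSum H₁ m h z y - sampleSum H₁ m h z x := by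
  unfold sampleSum
  rw [intervalIntegral.integral_finsetSum (fun i hi =>
    (hP.integrable_comp hm hh (Finset.mem_range.1 hi) hx hy).mul_const (z ^ i)),
    ← Finset.sum_sub_distrib]
  refine Finset.sum_congr rfl fun i hi => ?_
  have hi := Finset.mem_range.1 hi
  rw [intervalIntegral.integral_mul_const, intervalIntegral.integral_ofReal,
    intervalIntegral.integral_comp_add_left,
    hP.2 _ (grid_mem hm hh hi hx) _ (grid_mem hm hh hi hy)]
  push_cast; ring

lemma sampleSum_lipschitz {H₁ H₀ : ℝ → ℝ} (hP : IsPrimitive H₁ H₀)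
    (hm : m * h = 2) (hh : 0 ≤ h) {z : ℂ} {B : ℝ}
    (hB : ∀ x ∈ Set.Icc 0 h, ‖sampleSum H₀ m h z x‖ ≤ B) {x y : ℝ}
    (hx : x ∈ Set.Icc 0 h) (hy : y ∈ Set.Icc 0 h) :
    ‖sampleSum H₁ m h z y - sampleSum H₁ m h z x‖ ≤ B * |y - x| := by
  rw [← sampleSum_integral hP hm hh z hx hy]
  refine intervalIntegral.norm_integral_le_of_norm_le_const fun s hs => hB s ?_
  exact Set.uIcc_subset_Icc hx hy (Set.uIoc_subset_uIcc hs)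

/-- Passing to a primitive gains a factor `h / ‖1 - z‖`. -/
lemma sampleSum_gain {H₁ H₀ : ℝ → ℝ} (hP : IsPrimitive H₁ H₀) (h0 : H₁ (-1) = 0) (h1 : H₁ 1 = 0)
    (hm : m * h = 2) (hh : 0 ≤ h) {z : ℂ} (hz : ‖z‖ = 1) {B : ℝ}
    (hB : ∀ x ∈ Set.Icc 0 h, ‖sampleSum H₀ m h z x‖ ≤ B) {x : ℝ} (hx : x ∈ Set.Icc 0 h) :
    ‖1 - z‖ * ‖sampleSum H₁ m h z x‖ ≤ h * B := by
  have hs := sampleSum_shift H₁ m h z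
  rw [hm, show (-1 + 2 : ℝ) = 1 by norm_num, h0, h1] at hs
  have l0 := sampleSum_lipschitz hP hm hh hB (x := 0) (y := x) ⟨le_rfl, hh⟩ hx
  have l1 := sampleSum_lipschitz hP hm hh hB (x := x) (y := h) hx ⟨hh, le_rfl⟩
  have e : (1 - z) * sampleSum H₁ m h z x =
      (sampleSum H₁ m h z x - sampleSum H₁ m h z 0) +
        z * (sampleSum H₁ m h z h - sampleSum H₁ m h z x) := by
    push_cast at hs
    linear_combination -hs
  rw [← norm_mul, e]
  refine (norm_add_le _ _).trans ?_
  rw [norm_mul, hz, one_mul]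
  rw [abs_of_nonneg (by linarith [hx.1])] at l0
  rw [abs_of_nonneg (by linarith [hx.2])] at l1
  nlinarith

/-- Summation by parts for a function whose increments are dominated by those of `Φ`. -/
lemma sampleSum_variation {H Φ : ℝ → ℝ}
    (hΦ : ∀ x ∈ Set.Icc (-1 : ℝ) 1, ∀ y ∈ Set.Icc (-1 : ℝ) 1, x ≤ y → |H y - H x| ≤ Φ y - Φ x)
    (hm : m * h = 2) (hh : 0 < h) {z : ℂ} (hz : ‖z‖ = 1) {x : ℝ} (hx : x ∈ Set.Icc 0 h) :
    ‖1 - z‖ * ‖sampleSum H m h z x‖ ≤ |H (-1)| + |H 1| + (Φ 1 - Φ (-1)) := by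
  have key : ∀ k : ℕ, k + 1 ≤ m →
      ‖(1 - z) * ∑ i ∈ Finset.range (k + 1), (H (-1 + i * h + x) : ℂ) * z ^ i +
        (H (-1 + k * h + x) : ℂ) * z ^ (k + 1)‖ ≤ |H (-1)| + (Φ (-1 + k * h + x) - Φ (-1)) := by
    intro k
    induction k with
    | zero =>
      intro hk
      have := hΦ (-1) (by simp) _ (grid_mem hm hh.le (i := 0) (by omega) hx) (by simpa using hx.1)
      simp only [zero_add, Finset.range_one, Finset.sum_singleton, pow_zero, mul_one, pow_one]
      rw [show (1 - z) * (H (-1 + ((0 : ℕ) : ℝ) * h + x) : ℂ) + (H (-1 + ((0 : ℕ) : ℝ) * h + x)) * z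
        = (H (-1 + ((0 : ℕ) : ℝ) * h + x)) by ring, Complex.norm_real, Real.norm_eq_abs]
      have h2 := abs_sub_abs_le_abs_sub (H (-1 + ((0 : ℕ) : ℝ) * h + x)) (H (-1))
      linarith
    | succ k ih =>
      intro hk
      have i1 := ih (by omega)
      have i2 := hΦ _ (grid_mem hm hh.le (i := k) (by omega) hx) _
        (grid_mem hm hh.le (i := k + 1) (by omega) hx) (by push_cast; nlinarith)
      rw [Finset.sum_range_succ]
      set S := ∑ i ∈ Finset.range (k + 1), (H (-1 + i * h + x) : ℂ) * z ^ i
      set A := H (-1 + (k : ℝ) * h + x)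
      set A' := H (-1 + ((k + 1 : ℕ) : ℝ) * h + x)
      have e : (1 - z) * (S + (A' : ℂ) * z ^ (k + 1)) + (A' : ℂ) * z ^ (k + 1 + 1) =
          ((1 - z) * S + A * z ^ (k + 1)) + ((A' - A : ℝ) : ℂ) * z ^ (k + 1) := by
        push_cast; ring
      rw [e]
      refine (norm_add_le _ _).trans ?_
      rw [norm_mul, norm_pow, hz, one_pow, mul_one, Complex.norm_real, Real.norm_eq_abs]
      linarith
  obtain ⟨k, rfl⟩ : ∃ k, m = k + 1 := Nat.exists_eq_succ_of_ne_zero (by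
    rintro rfl; norm_num at hm)
  have h1 := key k le_rfl
  have hk := grid_mem hm hh.le (i := k) (by omega) hx
  have h2 := hΦ _ hk 1 (by simp) hk.2
  have h3 := abs_sub_abs_le_abs_sub (H (-1 + (k : ℝ) * h + x)) (H 1)
  rw [abs_sub_comm (H (-1 + (k : ℝ) * h + x))] at h3
  rw [← norm_mul, sampleSum]
  have h4 := norm_sub_le ((1 - z) * ∑ i ∈ Finset.range (k + 1), (H (-1 + i * h + x) : ℂ) * z ^ i +
        (H (-1 + k * h + x) : ℂ) * z ^ (k + 1)) ((H (-1 + k * h + x) : ℂ) * z ^ (k + 1))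
  rw [add_sub_cancel_right, norm_mul (H (-1 + k * h + x) : ℂ), norm_pow, hz, one_pow, mul_one,
    Complex.norm_real, Real.norm_eq_abs] at h4
  linarith

/-- Decay of the exponential sum of a function with a seventh derivative of bounded variation. -/
lemma sampleSum_decay {H : ℕ → ℝ → ℝ} (hP : ∀ j < 7, IsPrimitive (H (j + 1)) (H j))
    (h0 : ∀ j < 7, H (j + 1) (-1) = 0) (h1 : ∀ j < 7, H (j + 1) 1 = 0) {Φ : ℝ → ℝ}
    (hΦ : ∀ x ∈ Set.Icc (-1 : ℝ) 1, ∀ y ∈ Set.Icc (-1 : ℝ) 1, x ≤ y →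
      |H 0 y - H 0 x| ≤ Φ y - Φ x)
    (hm : m * h = 2) (hh : 0 < h) {z : ℂ} (hz : ‖z‖ = 1) :
    ‖1 - z‖ ^ 8 * ‖sampleSum (H 7) m h z 0‖ ≤
      h ^ 7 * (|H 0 (-1)| + |H 0 1| + (Φ 1 - Φ (-1))) := by
  rcases (norm_nonneg (1 - z)).eq_or_lt with hd | hd
  · rw [← hd]
    have e1 := hΦ (-1) (by simp) 1 (by simp) (by norm_num)
    have e2 := (abs_nonneg _).trans e1
    simp only [ne_eq, OfNat.ofNat_ne_zero, not_false_eq_true, zero_pow, zero_mul]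
    positivity
  set T := |H 0 (-1)| + |H 0 1| + (Φ 1 - Φ (-1))
  have key : ∀ j ≤ 7, ∀ x ∈ Set.Icc 0 h,
      ‖sampleSum (H j) m h z x‖ ≤ h ^ j * T / ‖1 - z‖ ^ (j + 1) := by
    intro j
    induction j with
    | zero =>
      intro _ x hx
      rw [le_div_iff₀ (by positivity)]
      have := sampleSum_variation hΦ hm hh hz hx
      simp only [zero_add, pow_one, pow_zero, one_mul]
      linarith
    | succ j ih =>
      intro hj x hx
      have := sampleSum_gain (hP j (by omega)) (h0 j (by omega)) (h1 j (by omega)) hm hh.le hz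
        (ih (by omega)) hx
      rw [le_div_iff₀ (by positivity)]
      rw [← mul_div_assoc, le_div_iff₀ (by positivity)] at this
      calc _ = ‖1 - z‖ * ‖sampleSum (H (j + 1)) m h z x‖ * ‖1 - z‖ ^ (j + 1) := by ring
        _ ≤ _ := this
        _ = _ := by ring
  have := key 7 le_rfl 0 ⟨le_rfl, hh.le⟩
  rw [le_div_iff₀ (by positivity)] at this
  rwa [mul_comm]

lemma sampleSum_mean {H₂ H₁ H₀ : ℝ → ℝ} (hP : IsPrimitive H₁ H₀) (hP' : IsPrimitive H₂ H₁)
    (hm : m * h = 2) (hh : 0 ≤ h) {B : ℝ}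
    (hB : ∀ x ∈ Set.Icc 0 h, ‖sampleSum H₀ m h 1 x‖ ≤ B) {x : ℝ} (hx : x ∈ Set.Icc 0 h) :
    ‖h * sampleSum H₁ m h 1 x - ((H₂ 1 - H₂ (-1) : ℝ) : ℂ)‖ ≤ h * (h * B) := by
  have m0 : (0 : ℝ) ∈ Set.Icc 0 h := ⟨le_rfl, hh⟩
  have m1 : h ∈ Set.Icc 0 h := ⟨hh, le_rfl⟩
  have hs := sampleSum_shift H₂ m h 1
  rw [hm, show (-1 + 2 : ℝ) = 1 by norm_num] at hs
  have hB0 : 0 ≤ B := (norm_nonneg _).trans (hB 0 m0)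
  have e : h * sampleSum H₁ m h 1 x - ((H₂ 1 - H₂ (-1) : ℝ) : ℂ) =
      ∫ y in (0 : ℝ)..h, (sampleSum H₁ m h 1 x - sampleSum H₁ m h 1 y) := by
    rw [intervalIntegral.integral_sub (by simp) (sampleSum_integrable hP' hm hh 1 m0 m1),
      sampleSum_integral hP' hm hh 1 m0 m1, intervalIntegral.integral_const]
    simp only [sub_zero, Complex.real_smul]
    simp only [one_mul, one_pow, mul_one] at hs
    push_cast
    linear_combination hs
  rw [e]
  refine (intervalIntegral.norm_integral_le_of_norm_le_const (C := h * B) fun y hy => ?_).trans ?_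
  · have hy' : y ∈ Set.Icc 0 h := by
      rw [Set.uIoc_of_le hh] at hy; exact ⟨hy.1.le, hy.2⟩
    refine (sampleSum_lipschitz hP hm hh hB hy' hx).trans ?_
    rw [mul_comm]
    refine mul_le_mul_of_nonneg_right ?_ hB0
    rw [abs_le]; constructor <;> linarith [hx.1, hx.2, hy'.1, hy'.2]
  · rw [sub_zero, abs_of_nonneg hh]; linarith

/-- High-order accuracy of the trapezoidal rule for a function vanishing to order seven at `±1`. -/
lemma sampleSum_trapezoid {H : ℕ → ℝ → ℝ} (hP : ∀ j < 8, IsPrimitive (H (j + 1)) (H j))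
    (h0 : ∀ j < 7, H (j + 1) (-1) = 0) (h1 : ∀ j < 7, H (j + 1) 1 = 0) {S : ℝ}
    (hS : ∀ x ∈ Set.Icc (-1 : ℝ) 1, |H 0 x| ≤ S) (hm : m * h = 2) (hh : 0 < h) :
    ‖h * sampleSum (H 7) m h 1 0 - ((H 8 1 - H 8 (-1) : ℝ) : ℂ)‖ ≤ 2 * h ^ 7 * S := by
  have key : ∀ j ≤ 6, ∀ x ∈ Set.Icc 0 h, ‖sampleSum (H j) m h 1 x‖ ≤ h ^ j * (m * S) := by
    intro j
    induction j with
    | zero =>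
      intro _ x hx
      refine (norm_sum_le _ _).trans ?_
      rw [pow_zero, one_mul]
      refine (Finset.sum_le_card_nsmul _ _ S fun i hi => ?_).trans (by simp)
      simpa using hS _ (grid_mem hm hh.le (Finset.mem_range.1 hi) hx)
    | succ j ih =>
      intro hj x hx
      have := sampleSum_mean (hP j (by omega)) (hP (j + 1) (by omega)) hm hh.le
        (ih (by omega)) hx
      rw [h0 (j + 1) (by omega), h1 (j + 1) (by omega)] at this
      simp only [sub_zero, Complex.ofReal_zero, norm_mul, Complex.norm_real, Real.norm_eq_abs,
        abs_of_pos hh] at this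
      have := le_of_mul_le_mul_left this hh
      rw [pow_succ]; linarith
  have := sampleSum_mean (hP 6 (by omega)) (hP 7 (by omega)) hm hh.le (key 6 le_rfl)
    (x := 0) ⟨le_rfl, hh.le⟩
  refine this.trans (le_of_eq ?_)
  calc h * (h * (h ^ 6 * (m * S))) = (m * h) * h ^ 7 * S := by ring
    _ = _ := by rw [hm]

end grid

lemma sqrt_two_bounds : 1.41421 < √2 ∧ √2 < 1.41422 :=
  ⟨Real.lt_sqrt_of_sq_lt (by norm_num), by rw [Real.sqrt_lt' (by norm_num)]; norm_num⟩

lemma outer_knot_bounds : 0.92387 < √(1 / 2 + √2 / 4) ∧ √(1 / 2 + √2 / 4) < 0.92389 := by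
  have := sqrt_two_bounds
  exact ⟨Real.lt_sqrt_of_sq_lt (by norm_num; linarith),
    by rw [Real.sqrt_lt' (by norm_num)]; norm_num; linarith⟩

lemma inner_knot_bounds : 0.38267 < √(1 / 2 - √2 / 4) ∧ √(1 / 2 - √2 / 4) < 0.38269 := by
  have := sqrt_two_bounds
  exact ⟨Real.lt_sqrt_of_sq_lt (by norm_num; linarith),
    by rw [Real.sqrt_lt' (by norm_num)]; norm_num; linarith⟩

/-- The zeros of the Chebyshev polynomial `U 7`, in increasing order. -/
noncomputable def knot : Fin 7 → ℝ :=
  ![-√(1 / 2 + √2 / 4), -(√2 / 2), -√(1 / 2 - √2 / 4), 0, √(1 / 2 - √2 / 4), √2 / 2,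
    √(1 / 2 + √2 / 4)]

lemma knot_strictMono : StrictMono knot := by
  have h1 := sqrt_two_bounds
  have h2 := outer_knot_bounds
  have h3 := inner_knot_bounds
  rw [Fin.strictMono_iff_lt_succ]
  intro i
  fin_cases i <;> simp [knot] <;> linarith

lemma knot_mem (i : Fin 7) : knot i ∈ Set.Ioo (-1 : ℝ) 1 := by
  have h1 := sqrt_two_bounds
  have h2 := outer_knot_bounds
  have h3 := inner_knot_bounds
  fin_cases i <;> simp [knot] <;> constructor <;> linarith

/-- Explicit form of the perfect spline chain on `[-1, 1]`. -/
noncomputable def spl : ℕ → ℝ → ℝ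
  | 0 => fun x => ∑ i : Fin 7, (-1) ^ (i.val + 1) * Real.sign (x - knot i)
  | (k + 1) => fun x => ((x + 1) ^ (k + 1) +
      2 * ∑ i : Fin 7, (-1) ^ (i.val + 1) * (max (x - knot i) 0) ^ (k + 1)) / (k + 1).factorial

lemma U_seven_eval (x : ℝ) :
    (Polynomial.Chebyshev.U ℝ 7).eval x = 128 * ∏ i : Fin 7, (x - knot i) := by
  have h0 : Polynomial.Chebyshev.U ℝ (7 : ℤ) =
      128 * Polynomial.X ^ 7 - 192 * Polynomial.X ^ 5 + 80 * Polynomial.X ^ 3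
        - 8 * Polynomial.X := by
    have e (n : ℤ) := Polynomial.Chebyshev.U_add_two ℝ n
    have e0 := e 0
    have e1 := e 1
    have e2 := e 2
    have e3 := e 3
    have e4 := e 4
    have e5 := e 5
    norm_num at e0 e1 e2 e3 e4 e5
    rw [e5, e4, e3, e2, e1, e0]
    ring
  have hc : √2 ^ 2 = 2 := Real.sq_sqrt (by norm_num)
  have ha : √(1 / 2 + √2 / 4) ^ 2 = 1 / 2 + √2 / 4 := Real.sq_sqrt (by positivity)
  have hb : √(1 / 2 - √2 / 4) ^ 2 = 1 / 2 - √2 / 4 :=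
    Real.sq_sqrt (by linarith [sqrt_two_bounds.2])
  rw [h0]
  simp only [knot, Fin.prod_univ_seven, Matrix.cons_val]
  simp only [Polynomial.eval_sub, Polynomial.eval_add, Polynomial.eval_mul, Polynomial.eval_pow,
    Polynomial.eval_X, Polynomial.eval_ofNat]
  generalize √(1 / 2 + √2 / 4) = a at *
  generalize √(1 / 2 - √2 / 4) = b at *
  generalize √2 = c at *
  have hfac : (x - -a) * (x - -(c / 2)) * (x - -b) * (x - 0) * (x - b) * (x - c / 2) * (x - a)
      = x * (x ^ 2 - c ^ 2 / 4) * (x ^ 2 - a ^ 2) * (x ^ 2 - b ^ 2) := by ring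
  rw [hfac, ha, hb]
  have h2 : (x ^ 2 - (1 / 2 + c / 4)) * (x ^ 2 - (1 / 2 - c / 4)) = x ^ 4 - x ^ 2 + 1 / 8 := by
    linear_combination (-1 / 16) * hc
  rw [mul_assoc, h2, hc]
  ring

lemma real_sign_mul (x y : ℝ) : Real.sign (x * y) = Real.sign x * Real.sign y := by
  rcases lt_trichotomy x 0 with hx | rfl | hx <;> rcases lt_trichotomy y 0 with hy | rfl | hy <;>
    simp [Real.sign_of_neg, Real.sign_of_pos, mul_pos_of_neg_of_neg, mul_neg_of_neg_of_pos,
      mul_neg_of_pos_of_neg, *]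

lemma sign_mul_sign_of_lt {x a b : ℝ} (h : a < b) :
    Real.sign (x - a) * Real.sign (x - b) = 1 - Real.sign (x - a) + Real.sign (x - b) := by
  rcases lt_trichotomy x a with hx | rfl | hx
  · rw [Real.sign_of_neg (by linarith : x - a < 0), Real.sign_of_neg (by linarith : x - b < 0)]
    norm_num
  · rw [sub_self, Real.sign_zero, Real.sign_of_neg (by linarith : x - b < 0)]
    norm_num
  · rw [Real.sign_of_pos (by linarith : 0 < x - a)]
    norm_num

lemma fspline_zero (x : ℝ) : fspline 8 0 x = spl 0 x := by
  have hl : ∀ i j : Fin 7, i < j → Real.sign (x - knot i) * Real.sign (x - knot j) =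
      1 - Real.sign (x - knot i) + Real.sign (x - knot j) :=
    fun i j hij => sign_mul_sign_of_lt (knot_strictMono hij)
  have h7 : (((8 : ℕ) : ℤ) - 1) = 7 := by norm_num
  simp only [fspline, spl]
  rw [h7, U_seven_eval, real_sign_mul, Real.sign_of_pos (by norm_num : (0 : ℝ) < 128)]
  simp only [Fin.prod_univ_seven, Fin.sum_univ_seven, real_sign_mul]
  obtain ⟨s, hs⟩ : ∃ s : Fin 7 → ℝ, ∀ i, s i = Real.sign (x - knot i) := ⟨_, fun _ => rfl⟩
  simp only [← hs] at hl ⊢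
  have p2 := hl 0 1 (by decide)
  have p3 : s 0 * s 1 * s 2 = s 0 - s 1 + s 2 := by
    linear_combination s 2 * p2 - hl 0 2 (by decide) + hl 1 2 (by decide)
  have p4 : s 0 * s 1 * s 2 * s 3 = 1 - s 0 + s 1 - s 2 + s 3 := by
    linear_combination s 3 * p3 + hl 0 3 (by decide) - hl 1 3 (by decide) + hl 2 3 (by decide)
  have p5 : s 0 * s 1 * s 2 * s 3 * s 4 = s 0 - s 1 + s 2 - s 3 + s 4 := by
    linear_combination s 4 * p4 - hl 0 4 (by decide) + hl 1 4 (by decide) - hl 2 4 (by decide) + hl 3 4 (by decide)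
  have p6 : s 0 * s 1 * s 2 * s 3 * s 4 * s 5 = 1 - s 0 + s 1 - s 2 + s 3 - s 4 + s 5 := by
    linear_combination s 5 * p5 + hl 0 5 (by decide) - hl 1 5 (by decide) + hl 2 5 (by decide) - hl 3 5 (by decide) + hl 4 5 (by decide)
  norm_num
  linear_combination -(s 6 * p6 - hl 0 6 (by decide) + hl 1 6 (by decide) - hl 2 6 (by decide) + hl 3 6 (by decide) - hl 4 6 (by decide) + hl 5 6 (by decide))

lemma spl_hasDerivAt (k : ℕ) {x : ℝ} (hx : x ∉ Set.range knot) :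
    HasDerivAt (spl (k + 1)) (spl k x) x := by
  have hne : ∀ i, x ≠ knot i := fun i h => hx ⟨i, h.symm⟩
  have hmax : ∀ i, HasDerivAt (fun y => (max (y - knot i) 0) ^ (k + 1))
      ((k + 1) * (if x < knot i then 0 else (x - knot i) ^ k)) x := by
    intro i
    rcases (hne i).lt_or_gt with h | h
    · rw [if_pos h, mul_zero]
      refine (hasDerivAt_const x (0 : ℝ)).congr_of_eventuallyEq ?_
      filter_upwards [Iio_mem_nhds h] with y hy
      rw [max_eq_right (by linarith [Set.mem_Iio.1 hy])]; simp
    · rw [if_neg h.le.not_gt]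
      have : HasDerivAt (fun y => (y - knot i) ^ (k + 1)) ((k + 1) * (x - knot i) ^ k) x := by
        simpa using ((hasDerivAt_id x).sub_const (knot i)).fun_pow (k + 1)
      refine this.congr_of_eventuallyEq ?_
      filter_upwards [Ioi_mem_nhds h] with y hy
      rw [max_eq_left (by linarith [Set.mem_Ioi.1 hy])]
  have h1 : HasDerivAt (fun y : ℝ => (y + 1) ^ (k + 1)) ((k + 1) * (x + 1) ^ k) x := by
    simpa using ((hasDerivAt_id x).add_const 1).fun_pow (k + 1)
  have h2 := (h1.add ((HasDerivAt.fun_sum (u := Finset.univ) fun i _ =>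
    (hmax i).const_mul ((-1 : ℝ) ^ (i.val + 1))).const_mul 2)).div_const ((k + 1).factorial : ℝ)
  refine h2.congr_deriv ?_
  have hk : ((k + 1).factorial : ℝ) = (k + 1) * k.factorial := by
    rw [Nat.factorial_succ]; push_cast; ring
  have hk0 : (k.factorial : ℝ) ≠ 0 := by positivity
  have hk1 : (k + 1 : ℝ) ≠ 0 := by positivity
  cases k with
  | zero =>
    simp only [spl, hk]
    have : ∀ i, Real.sign (x - knot i) = 2 * (if x < knot i then 0 else 1) - 1 := by
      intro i
      rcases (hne i).lt_or_gt with h | h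
      · rw [if_pos h, Real.sign_of_neg (by linarith)]; norm_num
      · rw [if_neg h.le.not_gt, Real.sign_of_pos (by linarith)]; norm_num
    simp only [this, Fin.sum_univ_seven, pow_zero]
    generalize (if x < knot 0 then (0 : ℝ) else 1) = t0
    generalize (if x < knot 1 then (0 : ℝ) else 1) = t1
    generalize (if x < knot 2 then (0 : ℝ) else 1) = t2
    generalize (if x < knot 3 then (0 : ℝ) else 1) = t3
    generalize (if x < knot 4 then (0 : ℝ) else 1) = t4
    generalize (if x < knot 5 then (0 : ℝ) else 1) = t5
    generalize (if x < knot 6 then (0 : ℝ) else 1) = t6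
    norm_num
    ring
  | succ n =>
    have : ∀ i, (if x < knot i then 0 else (x - knot i) ^ (n + 1)) =
        (max (x - knot i) 0) ^ (n + 1) := by
      intro i
      rcases (hne i).lt_or_gt with h | h
      · rw [if_pos h, max_eq_right (by linarith)]; simp
      · rw [if_neg h.le.not_gt, max_eq_left (by linarith)]
    simp only [this, spl, hk]
    rw [div_eq_div_iff (by positivity) hk0]
    simp only [Fin.sum_univ_seven]
    ring

lemma spl_continuous (k : ℕ) : Continuous (spl (k + 1)) := by
  unfold spl; fun_prop

lemma real_sign_mono : Monotone Real.sign := by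
  intro x y h
  rcases lt_trichotomy x 0 with hx | rfl | hx <;> rcases lt_trichotomy y 0 with hy | rfl | hy <;>
    simp [Real.sign_of_neg, Real.sign_of_pos, *] <;> linarith

lemma spl_integrable (k : ℕ) (a b : ℝ) : IntervalIntegrable (spl k) MeasureTheory.volume a b := by
  cases k with
  | zero =>
    have := IntervalIntegrable.sum (μ := MeasureTheory.volume) (a := a) (b := b)
      (Finset.univ : Finset (Fin 7)) fun i _ =>
      (Monotone.intervalIntegrable (μ := MeasureTheory.volume) (a := a) (b := b)
        (u := fun x => Real.sign (x - knot i))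
        fun _ _ h => real_sign_mono (by linarith)).const_mul ((-1) ^ (i.val + 1))
    rwa [Finset.sum_fn] at this
  | succ k => exact (spl_continuous k).intervalIntegrable _ _

/-- A continuous function differentiable off the knots is a primitive of its derivative. -/
lemma isPrimitive_of_hasDerivAt {H₁ H₀ : ℝ → ℝ} (hc : Continuous H₁)
    (hd : ∀ x, x ∉ Set.range knot → HasDerivAt H₁ (H₀ x) x)
    (hi : ∀ a b, IntervalIntegrable H₀ MeasureTheory.volume a b) : IsPrimitive H₁ H₀ :=
  ⟨hi _ _, fun _ _ _ _ => MeasureTheory.integral_eq_of_hasDerivAt_off_countable H₁ H₀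
    (Set.finite_range knot).countable hc.continuousOn (fun t ht => hd t ht.2) (hi _ _)⟩

lemma spl_isPrimitive (k : ℕ) : IsPrimitive (spl (k + 1)) (spl k) :=
  isPrimitive_of_hasDerivAt (spl_continuous k) (fun _ => spl_hasDerivAt k) (spl_integrable k)

lemma spl_neg_one (k : ℕ) : spl (k + 1) (-1) = 0 := by
  have : ∀ i, max (-1 - knot i) 0 = 0 := fun i => max_eq_right (by linarith [(knot_mem i).1])
  simp [spl, this]

lemma fspline_eq_spl (k : ℕ) : ∀ x ∈ Set.Icc (-1 : ℝ) 1, fspline 8 k x = spl k x := by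
  induction k with
  | zero => exact fun x _ => fspline_zero x
  | succ k ih =>
    intro x hx
    have h1 : (-1 : ℝ) ∈ Set.Icc (-1 : ℝ) 1 := by simp
    show ∫ t in (-1 : ℝ)..x, fspline 8 k t = _
    rw [intervalIntegral.integral_congr (g := spl k)
      (fun t ht => ih t (Set.uIcc_subset_Icc h1 hx ht)), (spl_isPrimitive k).2 _ h1 _ hx,
      spl_neg_one, sub_zero]

lemma spl_one (k : ℕ) : spl (k + 1) 1 = (2 ^ (k + 1) + 2 * (
    -(1 + √(1 / 2 + √2 / 4)) ^ (k + 1) - (1 - √(1 / 2 + √2 / 4)) ^ (k + 1)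
    + (1 + √2 / 2) ^ (k + 1) + (1 - √2 / 2) ^ (k + 1)
    - (1 + √(1 / 2 - √2 / 4)) ^ (k + 1) - (1 - √(1 / 2 - √2 / 4)) ^ (k + 1) + 1)) /
      (k + 1).factorial := by
  have : ∀ i, max (1 - knot i) 0 = 1 - knot i := fun i => max_eq_left (by linarith [(knot_mem i).2])
  simp only [spl, this]
  simp only [Fin.sum_univ_seven, knot, Matrix.cons_val]
  congr 1
  norm_num
  ring

lemma spl_values_one : (∀ k < 7, spl (k + 1) 1 = 0) ∧ spl 8 1 = 1 / 322560 ∧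
    spl 9 1 = 1 / 322560 ∧ spl 10 1 = 19 / 36 / 322560 := by
  have e8 := spl_one 7
  have e9 := spl_one 8
  have e10 := spl_one 9
  have ek := spl_one
  have hc : √2 ^ 2 = 2 := Real.sq_sqrt (by norm_num)
  have ha : √(1 / 2 + √2 / 4) ^ 2 = 1 / 2 + √2 / 4 := Real.sq_sqrt (by positivity)
  have hb : √(1 / 2 - √2 / 4) ^ 2 = 1 / 2 - √2 / 4 :=
    Real.sq_sqrt (by linarith [sqrt_two_bounds.2])
  generalize √(1 / 2 + √2 / 4) = a at *
  generalize √(1 / 2 - √2 / 4) = b at *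
  generalize √2 = c at *
  have c4 : c ^ 4 = 4 := by linear_combination (c ^ 2 + 2) * hc
  have c6 : c ^ 6 = 8 := by linear_combination c ^ 2 * c4 + 4 * hc
  have c8 : c ^ 8 = 16 := by linear_combination c ^ 2 * c6 + 8 * hc
  have c10 : c ^ 10 = 32 := by linear_combination c ^ 2 * c8 + 16 * hc
  have even : ∀ a c : ℝ, c ^ 2 = 2 → a ^ 2 = 1 / 2 + c / 4 → a ^ 4 = 3 / 8 + c / 4 ∧
      a ^ 6 = 5 / 16 + 7 * c / 32 ∧ a ^ 8 = 17 / 64 + 3 * c / 16 ∧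
      a ^ 10 = 29 / 128 + 41 * c / 256 := by
    intro a c hc ha
    have a4 : a ^ 4 = 3 / 8 + c / 4 := by
      linear_combination (a ^ 2 + 1 / 2 + c / 4) * ha + 1 / 16 * hc
    have a6 : a ^ 6 = 5 / 16 + 7 * c / 32 := by
      linear_combination a ^ 2 * a4 + (3 / 8 + c / 4) * ha + 1 / 16 * hc
    have a8 : a ^ 8 = 17 / 64 + 3 * c / 16 := by
      linear_combination a ^ 2 * a6 + (5 / 16 + 7 * c / 32) * ha + 7 / 128 * hc
    exact ⟨a4, a6, a8, by
      linear_combination a ^ 2 * a8 + (17 / 64 + 3 * c / 16) * ha + 3 / 64 * hc⟩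
  obtain ⟨a4, a6, a8, a10⟩ := even a c hc ha
  obtain ⟨b4, b6, b8, b10⟩ := even b (-c) (by linarith [hc, neg_sq c]) (by linarith)
  refine ⟨?_, ?_, ?_, ?_⟩
  · intro k hk
    rw [ek, div_eq_zero_iff]
    left
    interval_cases k <;> linarith
  · rw [e8, div_eq_iff (by positivity)]
    norm_num [Nat.factorial]
    linarith
  · rw [e9, div_eq_iff (by positivity)]
    norm_num [Nat.factorial]
    linarith
  · rw [e10, div_eq_iff (by positivity)]
    norm_num [Nat.factorial]
    linarith

lemma spl_zero_abs_le (x : ℝ) : |spl 0 x| ≤ 1 := by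
  rw [← fspline_zero]
  simp only [fspline]
  rcases Real.sign_apply_eq ((Polynomial.Chebyshev.U ℝ (((8 : ℕ) : ℤ) - 1)).eval x) with h | h | h <;>
    rw [h] <;> norm_num

lemma spl_one_abs_le {x : ℝ} (hx : x ∈ Set.Icc (-1 : ℝ) 1) : |spl 1 x| ≤ 1 / 5 := by
  obtain ⟨hx1, hx2⟩ := hx
  have h1 := sqrt_two_bounds
  have h2 := outer_knot_bounds
  have h3 := inner_knot_bounds
  simp only [spl, Fin.sum_univ_seven, knot, Matrix.cons_val]
  generalize √(1 / 2 + √2 / 4) = a at *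
  generalize √(1 / 2 - √2 / 4) = b at *
  generalize √2 = c at *
  norm_num at h1 h2 h3 ⊢
  rw [abs_le]
  have key : ∀ t : ℝ, (t ≤ x ∧ max (x - t) 0 = x - t) ∨ (x < t ∧ max (x - t) 0 = 0) := fun t =>
    (le_or_gt t x).imp (fun h => ⟨h, max_eq_left (by linarith)⟩)
      (fun h => ⟨h, max_eq_right (by linarith)⟩)
  have key' : ∀ t : ℝ, (-t ≤ x ∧ max (x + t) 0 = x + t) ∨ (x < -t ∧ max (x + t) 0 = 0) := fun t =>
    (le_or_gt (-t) x).imp (fun h => ⟨h, max_eq_left (by linarith)⟩)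
      (fun h => ⟨h, max_eq_right (by linarith)⟩)
  rcases le_or_gt 0 x with h0 | h0
  · rw [max_eq_left h0, max_eq_left (by linarith : 0 ≤ x + a),
      max_eq_left (by linarith : 0 ≤ x + c / 2), max_eq_left (by linarith : 0 ≤ x + b)]
    rcases key a with ⟨ha, ea⟩ | ⟨ha, ea⟩ <;> rcases key (c / 2) with ⟨hc, ec⟩ | ⟨hc, ec⟩ <;>
      rcases key b with ⟨hb, eb⟩ | ⟨hb, eb⟩ <;> rw [ea, eb, ec] <;> constructor <;> linarith
  · rw [max_eq_right h0.le, max_eq_right (by linarith : x - a ≤ 0),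
      max_eq_right (by linarith : x - c / 2 ≤ 0), max_eq_right (by linarith : x - b ≤ 0)]
    rcases key' a with ⟨ha, ea⟩ | ⟨ha, ea⟩ <;> rcases key' (c / 2) with ⟨hc, ec⟩ | ⟨hc, ec⟩ <;>
      rcases key' b with ⟨hb, eb⟩ | ⟨hb, eb⟩ <;> rw [ea, eb, ec] <;> constructor <;> linarith

lemma IsPrimitive.abs_sub_le {H₁ H₀ : ℝ → ℝ} (h : IsPrimitive H₁ H₀) {C : ℝ}
    (hC : ∀ x ∈ Set.Icc (-1 : ℝ) 1, |H₀ x| ≤ C) {x y : ℝ} (hx : x ∈ Set.Icc (-1 : ℝ) 1)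
    (hy : y ∈ Set.Icc (-1 : ℝ) 1) : |H₁ y - H₁ x| ≤ C * |y - x| := by
  rw [← h.2 x hx y hy, ← Real.norm_eq_abs]
  exact intervalIntegral.norm_integral_le_of_norm_le_const fun t ht =>
    hC t (Set.uIcc_subset_Icc hx hy (Set.uIoc_subset_uIcc ht))

lemma spl_two_abs_le {x : ℝ} (hx : x ∈ Set.Icc (-1 : ℝ) 1) : |spl 2 x| ≤ 1 / 5 := by
  have hp {y : ℝ} (hy : y ∈ Set.Icc (-1 : ℝ) 1) :=
    (spl_isPrimitive 1).abs_sub_le (C := 1 / 5) (fun x hx => spl_one_abs_le hx) hy hx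
  rcases le_total x 0 with h | h
  · have := hp (y := -1) (by simp)
    rw [spl_neg_one, sub_zero, abs_of_nonneg (by linarith [hx.1] : 0 ≤ x - -1)] at this
    norm_num at this ⊢
    linarith
  · have := hp (y := 1) (by simp)
    rw [spl_values_one.1 1 (by norm_num), sub_zero,
      abs_of_nonpos (by linarith [hx.2] : x - 1 ≤ 0)] at this
    norm_num at this ⊢
    linarith

/-- Iterated primitives ending at the product of `spl 7` with a quadratic polynomial. -/
noncomputable def chain (α β γ : ℝ) (j : ℕ) (x : ℝ) : ℝ :=
  (α + β * x + γ * x ^ 2) * spl j x + (7 - j) * (β + 2 * γ * x) * spl (j + 1) x +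
    (7 - j) * (6 - j) * γ * spl (j + 2) x

lemma chain_seven (α β γ x : ℝ) : chain α β γ 7 x = (α + β * x + γ * x ^ 2) * spl 7 x := by
  simp [chain]

lemma chain_isPrimitive (α β γ : ℝ) (j : ℕ) :
    IsPrimitive (chain α β γ (j + 1)) (chain α β γ j) := by
  refine isPrimitive_of_hasDerivAt ?_ ?_ ?_
  · have h1 := spl_continuous j
    have h2 := spl_continuous (j + 1)
    have h3 := spl_continuous (j + 2)
    unfold chain
    fun_prop
  · intro x hx
    have h1 := spl_hasDerivAt j hx
    have h2 := spl_hasDerivAt (j + 1) hx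
    have h3 := spl_hasDerivAt (j + 2) hx
    have hid := hasDerivAt_id x
    have hp : HasDerivAt (fun x => α + β * x + γ * x ^ 2) (β + 2 * γ * x) x := by
      have := ((hid.const_mul β).const_add α).add ((hid.pow 2).const_mul γ)
      refine this.congr_deriv ?_
      simp; ring
    have hq : HasDerivAt (fun x => β + 2 * γ * x) (2 * γ) x := by
      simpa using (hid.const_mul (2 * γ)).const_add β
    have := ((hp.mul h1).add ((hq.const_mul (7 - (j + 1 : ℕ) : ℝ)).mul h2)).add
      (h3.const_mul ((7 - (j + 1 : ℕ)) * (6 - (j + 1 : ℕ)) * γ : ℝ))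
    refine this.congr_deriv ?_
    simp only [chain]
    push_cast
    ring
  · intro a b
    have i1 := (spl_integrable j a b).continuousOn_mul
      (g := fun x => α + β * x + γ * x ^ 2) (by fun_prop)
    have i2 := (spl_integrable (j + 1) a b).continuousOn_mul
      (g := fun x => (7 - j) * (β + 2 * γ * x)) (by fun_prop)
    exact (i1.add i2).add ((spl_integrable (j + 2) a b).const_mul _)

lemma chain_neg_one (α β γ : ℝ) (j : ℕ) : chain α β γ (j + 1) (-1) = 0 := by
  simp [chain, spl_neg_one]

lemma chain_one (α β γ : ℝ) {j : ℕ} (hj : j < 7) : chain α β γ (j + 1) 1 = 0 := by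
  have h := spl_values_one.1
  unfold chain
  rw [h j hj]
  rcases Nat.lt_or_ge j 6 with h6 | h6
  · rw [h (j + 1) (by omega)]
    rcases Nat.lt_or_ge j 5 with h5 | h5
    · rw [h (j + 1 + 1) (by omega)]; simp
    · obtain rfl : j = 5 := by omega
      norm_num
  · obtain rfl : j = 6 := by omega
    norm_num

lemma chain_eight_one (α β γ : ℝ) : chain α β γ 8 1 = (α + γ / 18) / 322560 := by
  obtain ⟨-, h8, h9, h10⟩ := spl_values_one
  simp only [chain, h8, h9, h10]
  push_cast
  ring

/-- Variation function of `spl 0`. -/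
noncomputable def signSum (x : ℝ) : ℝ := ∑ i : Fin 7, Real.sign (x - knot i)

lemma signSum_endpoints : signSum 1 - signSum (-1) = 14 := by
  have h1 : ∀ i, Real.sign (1 - knot i) = 1 := fun i =>
    Real.sign_of_pos (by linarith [(knot_mem i).2])
  have h2 : ∀ i, Real.sign (-1 - knot i) = -1 := fun i =>
    Real.sign_of_neg (by linarith [(knot_mem i).1])
  simp [signSum, h1, h2]
  norm_num

lemma spl_zero_sub_le {x y : ℝ} (h : x ≤ y) : |spl 0 y - spl 0 x| ≤ signSum y - signSum x := by
  simp only [spl, signSum, ← Finset.sum_sub_distrib, ← mul_sub]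
  refine (Finset.abs_sum_le_sum_abs _ _).trans (Finset.sum_le_sum fun i _ => ?_)
  rw [abs_mul, abs_pow, abs_neg, abs_one, one_pow, one_mul, abs_of_nonneg]
  exact sub_nonneg.2 (real_sign_mono (by linarith))

lemma abs_quad_le {α β γ x : ℝ} (hα : 0 ≤ α) (hβ : 0 ≤ β) (hγ : 0 ≤ γ)
    (hx : x ∈ Set.Icc (-1 : ℝ) 1) : |α + β * x + γ * x ^ 2| ≤ α + β + γ := by
  rw [abs_le]
  constructor <;> nlinarith [mul_nonneg hβ (by linarith [hx.1] : 0 ≤ x + 1),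
    mul_nonneg hβ (by linarith [hx.2] : 0 ≤ 1 - x), mul_nonneg hγ (sq_nonneg x),
    mul_nonneg hγ (mul_nonneg (by linarith [hx.1] : 0 ≤ x + 1) (by linarith [hx.2] : 0 ≤ 1 - x))]

lemma abs_mul_sub_mul_le {p q p' q' A B C D : ℝ} (h1 : |p'| ≤ A) (h2 : |q' - q| ≤ B)
    (h3 : |p' - p| ≤ C) (h4 : |q| ≤ D) : |p' * q' - p * q| ≤ A * B + C * D := by
  have : p' * q' - p * q = p' * (q' - q) + (p' - p) * q := by ring
  rw [this]
  refine (abs_add_le _ _).trans (add_le_add ?_ ?_) <;> rw [abs_mul]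
  · exact mul_le_mul h1 h2 (abs_nonneg _) ((abs_nonneg _).trans h1)
  · exact mul_le_mul h3 h4 (abs_nonneg _) ((abs_nonneg _).trans h3)

lemma chain_zero_variation {α β γ : ℝ} (hα : 0 ≤ α) (hβ : 0 ≤ β) (hγ : 0 ≤ γ) {x y : ℝ}
    (hx : x ∈ Set.Icc (-1 : ℝ) 1) (hy : y ∈ Set.Icc (-1 : ℝ) 1) (hxy : x ≤ y) :
    |chain α β γ 0 y - chain α β γ 0 x| ≤
      ((α + β + γ) * signSum y + (8 * β + 27.2 * γ) * y) -
        ((α + β + γ) * signSum x + (8 * β + 27.2 * γ) * x) := by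
  have hd : |y - x| = y - x := abs_of_nonneg (by linarith)
  have l1 := (spl_isPrimitive 0).abs_sub_le (C := 1) (fun x _ => spl_zero_abs_le x) hx hy
  have l2 := (spl_isPrimitive 1).abs_sub_le (C := 1 / 5) (fun x hx => spl_one_abs_le hx) hx hy
  rw [hd] at l1 l2
  have p0 : |(α + β * y + γ * y ^ 2) - (α + β * x + γ * x ^ 2)| ≤ (β + 2 * γ) * (y - x) := by
    have : (α + β * y + γ * y ^ 2) - (α + β * x + γ * x ^ 2) = (β + γ * (x + y)) * (y - x) := by
      ring
    rw [this, abs_mul, hd]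
    refine mul_le_mul_of_nonneg_right ?_ (by linarith)
    rw [abs_le]
    constructor <;> nlinarith [hx.1, hx.2, hy.1, hy.2]
  have p1 : |(β + 2 * γ * y) - (β + 2 * γ * x)| ≤ 2 * γ * (y - x) := by
    have : (β + 2 * γ * y) - (β + 2 * γ * x) = 2 * γ * (y - x) := by ring
    rw [this, abs_of_nonneg]
    exact mul_nonneg (by linarith) (by linarith)
  have p1' : |β + 2 * γ * y| ≤ β + 2 * γ := by
    rw [abs_le]
    constructor <;> nlinarith [hy.1, hy.2]
  have b0 := abs_mul_sub_mul_le (abs_quad_le hα hβ hγ hy) (spl_zero_sub_le hxy) p0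
    (spl_zero_abs_le x)
  have b1 := abs_mul_sub_mul_le p1' l1 p1 (spl_one_abs_le hx)
  simp only [Nat.reduceAdd] at l1 l2 b0 b1
  simp only [chain]
  rw [abs_le] at l2 b0 b1 ⊢
  norm_num
  constructor <;> nlinarith

lemma chain_zero_abs_le {α β γ : ℝ} (hα : 0 ≤ α) (hβ : 0 ≤ β) (hγ : 0 ≤ γ) {x : ℝ}
    (hx : x ∈ Set.Icc (-1 : ℝ) 1) :
    |chain α β γ 0 x| ≤ α + 2.4 * β + 12.2 * γ := by
  have p1 : |β + 2 * γ * x| ≤ β + 2 * γ := by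
    rw [abs_le]
    constructor <;> nlinarith [hx.1, hx.2]
  have h0 := abs_quad_le hα hβ hγ hx
  have b0 : |(α + β * x + γ * x ^ 2) * spl 0 x| ≤ (α + β + γ) * 1 := by
    rw [abs_mul]
    exact mul_le_mul h0 (spl_zero_abs_le x) (abs_nonneg _) ((abs_nonneg _).trans h0)
  have b1 : |(β + 2 * γ * x) * spl 1 x| ≤ (β + 2 * γ) * (1 / 5) := by
    rw [abs_mul]
    exact mul_le_mul p1 (spl_one_abs_le hx) (abs_nonneg _) ((abs_nonneg _).trans p1)
  have b2 : |γ * spl 2 x| ≤ γ * (1 / 5) := by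
    rw [abs_mul, abs_of_nonneg hγ]
    exact mul_le_mul_of_nonneg_left (spl_two_abs_le hx) hγ
  simp only [chain]
  rw [abs_le] at b0 b1 b2 ⊢
  norm_num
  constructor <;> nlinarith

lemma chain_zero_endpoints {α β γ : ℝ} (hα : 0 ≤ α) (hβ : 0 ≤ β) (hγ : 0 ≤ γ) :
    |chain α β γ 0 (-1)| ≤ α + β + γ ∧ |chain α β γ 0 1| ≤ α + β + γ := by
  have h1 := spl_values_one.1 0 (by norm_num)
  have h2 := spl_values_one.1 1 (by norm_num)
  have h3 := spl_neg_one 0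
  have h4 := spl_neg_one 1
  norm_num at h1 h2 h3 h4
  have key : ∀ x : ℝ, x ∈ Set.Icc (-1 : ℝ) 1 → spl 1 x = 0 → spl 2 x = 0 →
      |chain α β γ 0 x| ≤ α + β + γ := by
    intro x hx e1 e2
    have : chain α β γ 0 x = (α + β * x + γ * x ^ 2) * spl 0 x := by simp [chain, e1, e2]
    rw [this, abs_mul]
    have h0 := abs_quad_le hα hβ hγ hx
    simpa using mul_le_mul h0 (spl_zero_abs_le x) (abs_nonneg _) ((abs_nonneg _).trans h0)
  exact ⟨key _ (by simp) h3 h4, key _ (by simp) h1 h2⟩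

/-- Fourier coefficients of the kernel before normalisation. -/
noncomputable def coeffG (N : ℕ) (n : ℤ) : ℝ := gtilde 8 ((n : ℝ) / (2 * ((N : ℝ) + 1)))

lemma coeffG_eq {N : ℕ} {n : ℤ} (hn : n ∈ Finset.Icc (-(N : ℤ)) N) :
    coeffG N n = spl 7 (n / ((N : ℝ) + 1)) := by
  have hN : (0 : ℝ) < N + 1 := by positivity
  rw [Finset.mem_Icc] at hn
  have h1 : (-(N : ℝ)) ≤ n := by exact_mod_cast hn.1
  have h2 : (n : ℝ) ≤ N := by exact_mod_cast hn.2
  have e : 2 * ((n : ℝ) / (2 * ((N : ℝ) + 1))) = n / ((N : ℝ) + 1) := by field_simp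
  rw [coeffG, gtilde, e]
  refine fspline_eq_spl 7 _ ⟨?_, ?_⟩
  · rw [le_div_iff₀ hN]; linarith
  · rw [div_le_iff₀ hN]; linarith

lemma sampleSum_eq_trig (N : ℕ) (α β γ : ℝ) {z : ℂ} (hz : z ≠ 0) :
    sampleSum (chain α β γ 7) (2 * (N + 1)) (1 / ((N : ℝ) + 1)) z 0 =
      z ^ (N + 1) * ∑ n ∈ Finset.Icc (-(N : ℤ)) N,
        ((α + β * (n / ((N : ℝ) + 1)) + γ * (n / ((N : ℝ) + 1)) ^ 2 : ℝ) : ℂ) *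
          coeffG N n * z ^ n := by
  have hN : (0 : ℝ) < N + 1 := by positivity
  have hN' : (N + 1 : ℝ) ≠ 0 := hN.ne'
  unfold sampleSum
  have e2 : 2 * (N + 1) = (2 * N + 1) + 1 := by ring
  rw [e2, Finset.sum_range_succ']
  have hz0 : chain α β γ 7 (-1 + ((0 : ℕ) : ℝ) * (1 / ((N : ℝ) + 1)) + 0) = 0 := by
    simpa using chain_neg_one α β γ 6
  rw [hz0, Complex.ofReal_zero, zero_mul, add_zero, Finset.mul_sum]
  refine Finset.sum_bij (fun i _ => (i : ℤ) - N) ?_ ?_ ?_ ?_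
  · intro i hi
    rw [Finset.mem_range] at hi
    rw [Finset.mem_Icc]; omega
  · intro i _ j _ h
    simpa using h
  · intro n hn
    rw [Finset.mem_Icc] at hn
    exact ⟨(n + N).toNat, by rw [Finset.mem_range]; omega, by omega⟩
  · intro i hi
    have hm : (i : ℤ) - N ∈ Finset.Icc (-(N : ℤ)) N := by
      rw [Finset.mem_range] at hi
      rw [Finset.mem_Icc]; omega
    have ex : (-1 + ((i + 1 : ℕ) : ℝ) * (1 / ((N : ℝ) + 1)) + 0) =
        (((i : ℤ) - N : ℤ) : ℝ) / ((N : ℝ) + 1) := by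
      push_cast; field_simp; ring
    rw [coeffG_eq hm, ex, chain_seven]
    have ez : z ^ (i + 1) = z ^ (N + 1) * z ^ ((i : ℤ) - N) := by
      rw [zpow_sub₀ hz, zpow_natCast, zpow_natCast, pow_succ, pow_succ]
      field_simp
    rw [ez]
    push_cast
    ring

lemma trig_decay (N : ℕ) {α β γ : ℝ} (hα : 0 ≤ α) (hβ : 0 ≤ β) (hγ : 0 ≤ γ) {z : ℂ}
    (hz : ‖z‖ = 1) :
    ‖1 - z‖ ^ 8 * ‖∑ n ∈ Finset.Icc (-(N : ℤ)) N,
        ((α + β * (n / ((N : ℝ) + 1)) + γ * (n / ((N : ℝ) + 1)) ^ 2 : ℝ) : ℂ) *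
          coeffG N n * z ^ n‖ ≤ (1 / ((N : ℝ) + 1)) ^ 7 * (16 * α + 32 * β + 71 * γ) := by
  have hN : (0 : ℝ) < N + 1 := by positivity
  have h := sampleSum_decay (H := chain α β γ) (fun j _ => chain_isPrimitive α β γ j)
    (fun j _ => chain_neg_one α β γ j) (fun j hj => chain_one α β γ hj)
    (Φ := fun x => (α + β + γ) * signSum x + (8 * β + 27.2 * γ) * x)
    (fun x hx y hy hxy => chain_zero_variation hα hβ hγ hx hy hxy)
    (m := 2 * (N + 1)) (h := 1 / ((N : ℝ) + 1)) (by push_cast; field_simp) (by positivity) hz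
  have hz0 : z ≠ 0 := by rintro rfl; simp at hz
  rw [sampleSum_eq_trig N α β γ hz0, norm_mul, norm_pow, hz, one_pow, one_mul] at h
  refine h.trans (mul_le_mul_of_nonneg_left ?_ (by positivity))
  obtain ⟨e1, e2⟩ := chain_zero_endpoints hα hβ hγ
  have e3 := signSum_endpoints
  nlinarith

lemma trig_mean (N : ℕ) {α β γ : ℝ} (hα : 0 ≤ α) (hβ : 0 ≤ β) (hγ : 0 ≤ γ) :
    (α + γ / 18) / 322560 - 2 * (1 / ((N : ℝ) + 1)) ^ 7 * (α + 2.4 * β + 12.2 * γ) ≤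
      1 / ((N : ℝ) + 1) * ∑ n ∈ Finset.Icc (-(N : ℤ)) N,
        (α + β * (n / ((N : ℝ) + 1)) + γ * (n / ((N : ℝ) + 1)) ^ 2) * coeffG N n := by
  have hN : (0 : ℝ) < N + 1 := by positivity
  have h := sampleSum_trapezoid (H := chain α β γ) (fun j _ => chain_isPrimitive α β γ j)
    (fun j _ => chain_neg_one α β γ j) (fun j hj => chain_one α β γ hj)
    (fun x hx => chain_zero_abs_le hα hβ hγ hx)
    (m := 2 * (N + 1)) (h := 1 / ((N : ℝ) + 1)) (by push_cast; field_simp) (by positivity)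
  rw [sampleSum_eq_trig N α β γ one_ne_zero, chain_eight_one, chain_neg_one, sub_zero, one_pow,
    one_mul] at h
  simp only [one_zpow, mul_one] at h
  have e : ∑ n ∈ Finset.Icc (-(N : ℤ)) N,
        ((α + β * (n / ((N : ℝ) + 1)) + γ * (n / ((N : ℝ) + 1)) ^ 2 : ℝ) : ℂ) * coeffG N n =
      ((∑ n ∈ Finset.Icc (-(N : ℤ)) N,
        (α + β * (n / ((N : ℝ) + 1)) + γ * (n / ((N : ℝ) + 1)) ^ 2) * coeffG N n : ℝ) : ℂ) := by
    push_cast; rfl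
  rw [e, ← Complex.ofReal_mul, ← Complex.ofReal_sub, Complex.norm_real, Real.norm_eq_abs,
    abs_le] at h
  linarith [h.1]

lemma gnorm_eq (N : ℕ) : gnorm 8 N = ∑ n ∈ Finset.Icc (-(N : ℤ)) N, coeffG N n := rfl

lemma inv_pow_seven_le {N : ℕ} (hN : 20 ≤ N) : (1 / ((N : ℝ) + 1)) ^ 7 ≤ 1 / 1801088541 := by
  have h : (20 : ℝ) ≤ N := by exact_mod_cast hN
  have : 1 / ((N : ℝ) + 1) ≤ 1 / 21 := one_div_le_one_div_of_le (by norm_num) (by linarith)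
  calc (1 / ((N : ℝ) + 1)) ^ 7 ≤ (1 / 21) ^ 7 := pow_le_pow_left₀ (by positivity) this 7
    _ = _ := by norm_num

lemma gnorm_lower {N : ℕ} (hN : 20 ≤ N) :
    0.9996 / 322560 ≤ 1 / ((N : ℝ) + 1) * gnorm 8 N := by
  have h := trig_mean N (α := 1) (β := 0) (γ := 0) (by norm_num) le_rfl le_rfl
  simp only [zero_mul, add_zero, one_mul] at h
  rw [← gnorm_eq] at h
  have h7 := inv_pow_seven_le hN
  norm_num at h h7 ⊢
  linarith

lemma gnorm_pos {N : ℕ} (hN : 20 ≤ N) : 0 < gnorm 8 N := by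
  have h1 := gnorm_lower hN
  by_contra h0
  have : 1 / ((N : ℝ) + 1) * gnorm 8 N ≤ 0 :=
    mul_nonpos_of_nonneg_of_nonpos (by positivity) (not_lt.1 h0)
  norm_num at h1 this
  linarith

lemma second_moment_lower {N : ℕ} (hN : 20 ≤ N) :
    0.0511 * ((N : ℝ) + 1) ^ 2 / 322560 ≤
      1 / ((N : ℝ) + 1) * ∑ n ∈ Finset.Icc (-(N : ℤ)) N, (n : ℝ) ^ 2 * coeffG N n := by
  have hN' : (0 : ℝ) < N + 1 := by positivity
  have h := trig_mean N (α := 0) (β := 0) (γ := 1) le_rfl le_rfl (by norm_num)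
  have e : ∑ n ∈ Finset.Icc (-(N : ℤ)) N, (n : ℝ) ^ 2 * coeffG N n = ((N : ℝ) + 1) ^ 2 *
      ∑ n ∈ Finset.Icc (-(N : ℤ)) N,
        (0 + 0 * (n / ((N : ℝ) + 1)) + 1 * (n / ((N : ℝ) + 1)) ^ 2) * coeffG N n := by
    rw [Finset.mul_sum]
    refine Finset.sum_congr rfl fun n _ => ?_
    field_simp
    ring
  have h7 := inv_pow_seven_le hN
  rw [e]
  have h8 : 0.0511 / 322560 ≤ 1 / ((N : ℝ) + 1) * ∑ n ∈ Finset.Icc (-(N : ℤ)) N,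
        (0 + 0 * (n / ((N : ℝ) + 1)) + 1 * (n / ((N : ℝ) + 1)) ^ 2) * coeffG N n := by
    refine le_trans ?_ h
    norm_num at h7 ⊢
    linarith
  have h9 := mul_le_mul_of_nonneg_left h8 (by positivity : 0 ≤ ((N : ℝ) + 1) ^ 2)
  linarith

/-- Decay of the trigonometric moment sums of order `m ≤ 2`. -/
lemma moment_decay (N : ℕ) {m : ℕ} (hm : m ≤ 2) {z : ℂ} (hz : ‖z‖ = 1) :
    ‖1 - z‖ ^ 8 * ‖∑ n ∈ Finset.Icc (-(N : ℤ)) N, (n : ℂ) ^ m * coeffG N n * z ^ n‖ ≤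
      ((N : ℝ) + 1) ^ m / ((N : ℝ) + 1) ^ 7 * (![16, 32, 71] : Fin 3 → ℝ) ⟨m, by omega⟩ := by
  have hN' : (0 : ℝ) < N + 1 := by positivity
  have hN'' : ((N : ℂ) + 1) ≠ 0 := by exact_mod_cast hN'.ne'
  have key : ∀ (α β γ : ℝ), (∀ t : ℝ, α + β * t + γ * t ^ 2 = t ^ m) →
      ∑ n ∈ Finset.Icc (-(N : ℤ)) N, (n : ℂ) ^ m * coeffG N n * z ^ n = ((N : ℂ) + 1) ^ m *
      ∑ n ∈ Finset.Icc (-(N : ℤ)) N,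
        ((α + β * (n / ((N : ℝ) + 1)) + γ * (n / ((N : ℝ) + 1)) ^ 2 : ℝ) : ℂ) *
          coeffG N n * z ^ n := by
    intro α β γ h
    rw [Finset.mul_sum]
    refine Finset.sum_congr rfl fun n _ => ?_
    rw [h]
    push_cast
    rw [div_pow]
    field_simp
  have hn : ‖(N : ℂ) + 1‖ = (N : ℝ) + 1 := by
    rw [← Nat.cast_succ, Complex.norm_natCast]; push_cast; rfl
  have fin : ∀ (α β γ : ℝ), (∀ t : ℝ, α + β * t + γ * t ^ 2 = t ^ m) → 0 ≤ α → 0 ≤ β → 0 ≤ γ →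
      ‖1 - z‖ ^ 8 * ‖∑ n ∈ Finset.Icc (-(N : ℤ)) N, (n : ℂ) ^ m * coeffG N n * z ^ n‖ ≤
      ((N : ℝ) + 1) ^ m / ((N : ℝ) + 1) ^ 7 * (16 * α + 32 * β + 71 * γ) := by
    intro α β γ h hα hβ hγ
    rw [key α β γ h, norm_mul, norm_pow, hn]
    have := mul_le_mul_of_nonneg_left (trig_decay N hα hβ hγ hz)
      (by positivity : 0 ≤ ((N : ℝ) + 1) ^ m)
    calc _ = _ := by ring
      _ ≤ _ := this
      _ = _ := by rw [one_div, inv_pow]; ring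
  interval_cases m
  · simpa using fin 1 0 0 (by intro t; ring) (by norm_num) le_rfl le_rfl
  · simpa using fin 0 1 0 (by intro t; ring) le_rfl (by norm_num) le_rfl
  · simpa using fin 0 0 1 (by intro t; ring) le_rfl le_rfl (by norm_num)

/-- The polynomial `P` with `σ̃_N(t) = P(cos t)`. -/
noncomputable def kerPoly (N : ℕ) : Polynomial ℝ :=
  ∑ n ∈ Finset.Icc (-(N : ℤ)) N,
    Polynomial.C (coeffG N n / gnorm 8 N) * Polynomial.Chebyshev.T ℝ n

lemma kerPoly_eval_cos (N : ℕ) (t : ℝ) : (kerPoly N).eval (Real.cos t) =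
    ∑ n ∈ Finset.Icc (-(N : ℤ)) N, coeffG N n / gnorm 8 N * Real.cos (n * t) := by
  simp [kerPoly, Polynomial.eval_finsetSum, Polynomial.Chebyshev.T_real_cos]

lemma exp_int_mul (n : ℤ) (t : ℝ) : Complex.exp ((n : ℂ) * t * Complex.I) =
    (Real.cos (n * t) : ℂ) + Real.sin (n * t) * Complex.I := by
  rw [Complex.ofReal_cos, Complex.ofReal_sin, ← Complex.exp_mul_I]
  push_cast
  rfl

lemma sigmaT_eq (N : ℕ) (t : ℝ) : sigmaT 8 N t = (kerPoly N).eval (Real.cos t) := by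
  have e : (1 / (gnorm 8 N : ℂ)) * ∑ k ∈ Finset.Icc (-(N : ℤ)) (N : ℤ),
        (gtilde 8 ((k : ℝ) / (2 * ((N : ℝ) + 1))) : ℂ) * Complex.exp ((k : ℂ) * t * Complex.I) =
      ((∑ n ∈ Finset.Icc (-(N : ℤ)) N, coeffG N n / gnorm 8 N * Real.cos (n * t) : ℝ) : ℂ) +
      ((∑ n ∈ Finset.Icc (-(N : ℤ)) N, coeffG N n / gnorm 8 N * Real.sin (n * t) : ℝ) : ℂ) *
        Complex.I := by
    push_cast
    rw [Finset.mul_sum, Finset.sum_mul, ← Finset.sum_add_distrib]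
    refine Finset.sum_congr rfl fun n _ => ?_
    rw [exp_int_mul, coeffG]
    push_cast
    ring
  rw [kerPoly_eval_cos, sigmaT, e]
  simp only [Complex.add_re, Complex.ofReal_re, Complex.re_ofReal_mul, Complex.I_re, mul_zero,
    add_zero]

lemma kerPoly_deriv_cos (N : ℕ) (t : ℝ) :
    (kerPoly N).derivative.eval (Real.cos t) * Real.sin t =
      ∑ n ∈ Finset.Icc (-(N : ℤ)) N, coeffG N n / gnorm 8 N * (n * Real.sin (n * t)) := by
  have h1 := ((kerPoly N).hasDerivAt (Real.cos t)).comp t (Real.hasDerivAt_cos t)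
  have h2 : HasDerivAt (fun t => ∑ n ∈ Finset.Icc (-(N : ℤ)) N,
      coeffG N n / gnorm 8 N * Real.cos (n * t))
      (∑ n ∈ Finset.Icc (-(N : ℤ)) N, coeffG N n / gnorm 8 N * (-Real.sin (n * t) * (n * 1))) t :=
    HasDerivAt.fun_sum fun n _ =>
      (((hasDerivAt_id t).const_mul (n : ℝ)).cos).const_mul (coeffG N n / gnorm 8 N)
  have h3 := h1.unique (h2.congr_of_eventuallyEq
    (Filter.Eventually.of_forall fun s => kerPoly_eval_cos N s))
  rw [mul_neg, neg_eq_iff_eq_neg] at h3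
  rw [h3, ← Finset.sum_neg_distrib]
  exact Finset.sum_congr rfl fun n _ => by ring

lemma kerPoly_deriv_two_cos (N : ℕ) (t : ℝ) :
    (1 - Real.cos t ^ 2) * (kerPoly N).derivative.derivative.eval (Real.cos t) -
      Real.cos t * (kerPoly N).derivative.eval (Real.cos t) =
      -∑ n ∈ Finset.Icc (-(N : ℤ)) N, coeffG N n / gnorm 8 N * (n ^ 2 * Real.cos (n * t)) := by
  have h1 := (((kerPoly N).derivative.hasDerivAt (Real.cos t)).comp t
    (Real.hasDerivAt_cos t)).mul (Real.hasDerivAt_sin t)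
  have h2 : HasDerivAt (fun t => ∑ n ∈ Finset.Icc (-(N : ℤ)) N,
      coeffG N n / gnorm 8 N * (n * Real.sin (n * t)))
      (∑ n ∈ Finset.Icc (-(N : ℤ)) N,
        coeffG N n / gnorm 8 N * (n * (Real.cos (n * t) * (n * 1)))) t :=
    HasDerivAt.fun_sum fun n _ =>
      ((((hasDerivAt_id t).const_mul (n : ℝ)).sin).const_mul (n : ℝ)).const_mul
        (coeffG N n / gnorm 8 N)
  have h3 := h1.unique (h2.congr_of_eventuallyEq
    (Filter.Eventually.of_forall fun s => kerPoly_deriv_cos N s))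
  have h4 : ∑ n ∈ Finset.Icc (-(N : ℤ)) N,
        coeffG N n / gnorm 8 N * ((n : ℝ) ^ 2 * Real.cos (n * t)) = ∑ n ∈ Finset.Icc (-(N : ℤ)) N,
        coeffG N n / gnorm 8 N * (n * (Real.cos (n * t) * (n * 1))) :=
    Finset.sum_congr rfl fun n _ => by ring
  rw [h4, ← h3, ← Real.sin_sq]
  simp only [Function.comp]
  ring

lemma kerPoly_one {N : ℕ} (hN : 20 ≤ N) : (kerPoly N).eval 1 = 1 := by
  have h := kerPoly_eval_cos N 0
  simp only [Real.cos_zero, mul_zero, mul_one] at h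
  rw [h, ← Finset.sum_div, ← gnorm_eq, div_self (gnorm_pos hN).ne']

lemma kerPoly_deriv_one (N : ℕ) : (kerPoly N).derivative.eval 1 =
    (∑ n ∈ Finset.Icc (-(N : ℤ)) N, (n : ℝ) ^ 2 * coeffG N n) / gnorm 8 N := by
  have h := kerPoly_deriv_two_cos N 0
  simp only [Real.cos_zero, mul_zero, mul_one, one_pow, sub_self, zero_mul, one_mul, zero_sub,
    neg_inj] at h
  rw [h, Finset.sum_div]
  exact Finset.sum_congr rfl fun n _ => by ring

lemma norm_one_sub_exp_sq (t : ℝ) :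
    ‖1 - Complex.exp (t * Complex.I)‖ ^ 2 = 2 - 2 * Real.cos t := by
  rw [Complex.exp_mul_I, ← Complex.ofReal_cos, ← Complex.ofReal_sin, ← Complex.normSq_eq_norm_sq,
    Complex.normSq_apply]
  simp
  rw [Complex.cos_ofReal_re, Complex.sin_ofReal_re]
  nlinarith [Real.sin_sq_add_cos_sq t]

lemma moment_sum_eq (N m : ℕ) (t : ℝ) :
    ∑ n ∈ Finset.Icc (-(N : ℤ)) N, (n : ℂ) ^ m * coeffG N n * Complex.exp (t * Complex.I) ^ n =
    ((∑ n ∈ Finset.Icc (-(N : ℤ)) N, coeffG N n * ((n : ℝ) ^ m * Real.cos (n * t)) : ℝ) : ℂ) +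
    ((∑ n ∈ Finset.Icc (-(N : ℤ)) N, coeffG N n * ((n : ℝ) ^ m * Real.sin (n * t)) : ℝ) : ℂ) *
      Complex.I := by
  push_cast
  rw [Finset.sum_mul, ← Finset.sum_add_distrib]
  refine Finset.sum_congr rfl fun n _ => ?_
  rw [← Complex.exp_int_mul, ← mul_assoc, exp_int_mul]
  push_cast
  ring

lemma moment_cos_sin_decay (N : ℕ) {m : ℕ} (hm : m ≤ 2) (t : ℝ) :
    (2 - 2 * Real.cos t) ^ 4 *
      |∑ n ∈ Finset.Icc (-(N : ℤ)) N, coeffG N n * ((n : ℝ) ^ m * Real.cos (n * t))| ≤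
        ((N : ℝ) + 1) ^ m / ((N : ℝ) + 1) ^ 7 * (![16, 32, 71] : Fin 3 → ℝ) ⟨m, by omega⟩ ∧
    (2 - 2 * Real.cos t) ^ 4 *
      |∑ n ∈ Finset.Icc (-(N : ℤ)) N, coeffG N n * ((n : ℝ) ^ m * Real.sin (n * t))| ≤
        ((N : ℝ) + 1) ^ m / ((N : ℝ) + 1) ^ 7 * (![16, 32, 71] : Fin 3 → ℝ) ⟨m, by omega⟩ := by
  have h := moment_decay N hm (Complex.norm_exp_ofReal_mul_I t)
  rw [moment_sum_eq] at h
  have e : ‖1 - Complex.exp (t * Complex.I)‖ ^ 8 = (2 - 2 * Real.cos t) ^ 4 := by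
    rw [← norm_one_sub_exp_sq]; ring
  rw [e] at h
  have h0 : 0 ≤ (2 - 2 * Real.cos t) ^ 4 := by positivity
  set A := ∑ n ∈ Finset.Icc (-(N : ℤ)) N, coeffG N n * ((n : ℝ) ^ m * Real.cos (n * t))
  set B := ∑ n ∈ Finset.Icc (-(N : ℤ)) N, coeffG N n * ((n : ℝ) ^ m * Real.sin (n * t))
  refine ⟨(mul_le_mul_of_nonneg_left ?_ h0).trans h, (mul_le_mul_of_nonneg_left ?_ h0).trans h⟩
  · simpa using Complex.abs_re_le_norm ((A : ℂ) + B * Complex.I)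
  · simpa using Complex.abs_im_le_norm ((A : ℂ) + B * Complex.I)

lemma abs_sum_div_gnorm {N : ℕ} (hN : 20 ≤ N) (w : ℤ → ℝ) {D E : ℝ}
    (h : D * |∑ n ∈ Finset.Icc (-(N : ℤ)) N, coeffG N n * w n| ≤ E) :
    D * |∑ n ∈ Finset.Icc (-(N : ℤ)) N, coeffG N n / gnorm 8 N * w n| * gnorm 8 N ≤ E := by
  have hg := gnorm_pos hN
  have e : ∑ n ∈ Finset.Icc (-(N : ℤ)) N, coeffG N n / gnorm 8 N * w n =
      (∑ n ∈ Finset.Icc (-(N : ℤ)) N, coeffG N n * w n) / gnorm 8 N := by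
    rw [Finset.sum_div]
    exact Finset.sum_congr rfl fun n _ => by ring
  rw [e, abs_div, abs_of_pos hg]
  calc _ = D * |∑ n ∈ Finset.Icc (-(N : ℤ)) N, coeffG N n * w n| := by field_simp
    _ ≤ E := h

/-- Localisation of the kernel polynomial and of its first two derivatives. -/
lemma kerPoly_bounds {N : ℕ} (hN : 20 ≤ N) {c : ℝ} (hc1 : -1 ≤ c) (hc2 : c ≤ 1) :
    (2 - 2 * c) ^ 4 * |(kerPoly N).eval c| * gnorm 8 N ≤ 16 / ((N : ℝ) + 1) ^ 7 ∧
    (2 - 2 * c) ^ 4 * (|(kerPoly N).derivative.eval c| * √(1 - c ^ 2)) * gnorm 8 N ≤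
      32 / ((N : ℝ) + 1) ^ 6 ∧
    (2 - 2 * c) ^ 4 * |(1 - c ^ 2) * (kerPoly N).derivative.derivative.eval c -
      c * (kerPoly N).derivative.eval c| * gnorm 8 N ≤ 71 / ((N : ℝ) + 1) ^ 5 := by
  have hN' : (0 : ℝ) < N + 1 := by positivity
  obtain ⟨t, rfl⟩ : ∃ t, Real.cos t = c := ⟨Real.arccos c, Real.cos_arccos hc1 hc2⟩
  have h0 := abs_sum_div_gnorm hN _ (moment_cos_sin_decay N (m := 0) (by norm_num) t).1
  have h1 := abs_sum_div_gnorm hN _ (moment_cos_sin_decay N (m := 1) (by norm_num) t).2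
  have h2 := abs_sum_div_gnorm hN _ (moment_cos_sin_decay N (m := 2) (by norm_num) t).1
  refine ⟨?_, ?_, ?_⟩
  · rw [kerPoly_eval_cos]
    simp only [pow_zero, one_mul] at h0
    refine h0.trans (le_of_eq ?_)
    simp; ring
  · rw [← Real.sin_sq, Real.sqrt_sq_eq_abs, ← abs_mul, kerPoly_deriv_cos]
    simp only [pow_one] at h1
    refine h1.trans (le_of_eq ?_)
    simp; field_simp
  · rw [kerPoly_deriv_two_cos, abs_neg]
    refine h2.trans (le_of_eq ?_)
    simp; field_simp

lemma IsSO3.inv_eq {x : Mat3} (hx : IsSO3 x) : x⁻¹ = x.transpose := Matrix.inv_eq_left_inv hx.1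

lemma IsSO3.mul_transpose {x : Mat3} (hx : IsSO3 x) : x * x.transpose = 1 :=
  mul_eq_one_comm.1 hx.1

lemma IsSO3.transpose {x : Mat3} (hx : IsSO3 x) : IsSO3 x.transpose :=
  ⟨by rw [Matrix.transpose_transpose, hx.mul_transpose], by rw [Matrix.det_transpose, hx.2]⟩

lemma IsSO3.mul {x y : Mat3} (hx : IsSO3 x) (hy : IsSO3 y) : IsSO3 (x * y) := by
  refine ⟨?_, by rw [Matrix.det_mul, hx.2, hy.2, one_mul]⟩
  rw [Matrix.transpose_mul, Matrix.mul_assoc, ← Matrix.mul_assoc x.transpose, hx.1,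
    Matrix.one_mul, hy.1]

lemma exp_skew_orthogonal {A : Mat3} (hA : A.transpose = -A) :
    (NormedSpace.exp A).transpose * NormedSpace.exp A = 1 := by
  rw [← Matrix.exp_transpose, hA, Matrix.exp_neg]
  exact Matrix.nonsing_inv_mul _ ((Matrix.isUnit_iff_isUnit_det _).1 (Matrix.isUnit_exp A))

lemma isSO3_exp_skew {A : Mat3} (hA : A.transpose = -A) : IsSO3 (NormedSpace.exp A) := by
  refine ⟨exp_skew_orthogonal hA, ?_⟩
  have hB : ((1 / 2 : ℝ) • A).transpose = -((1 / 2 : ℝ) • A) := by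
    rw [Matrix.transpose_smul, hA, smul_neg]
  have h1 := congrArg Matrix.det (exp_skew_orthogonal hB)
  rw [Matrix.det_mul, Matrix.det_transpose, Matrix.det_one, ← Matrix.det_mul,
    ← Matrix.exp_add_of_commute _ _ (Commute.refl _), ← add_smul] at h1
  norm_num at h1
  exact h1

lemma Lgen_transpose (i : Fin 3) : (Lgen i).transpose = -Lgen i := by
  ext a b
  fin_cases i <;> fin_cases a <;> fin_cases b <;> simp [Lgen]

lemma isSO3_exp_Lgen (t : ℝ) (i : Fin 3) : IsSO3 (NormedSpace.exp (t • Lgen i)) :=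
  isSO3_exp_skew (by rw [Matrix.transpose_smul, Lgen_transpose, smul_neg])

open scoped Matrix.Norms.Operator in
lemma hasDerivAt_trace_mul_exp (A L : Mat3) :
    HasDerivAt (fun t : ℝ => Matrix.trace (A * NormedSpace.exp (t • L))) (Matrix.trace (A * L)) 0 := by
  have h := hasDerivAt_exp_smul_const (𝕂 := ℝ) L (0 : ℝ)
  simp only [zero_smul, NormedSpace.exp_zero, one_mul] at h
  let φ : Mat3 →ₗ[ℝ] ℝ := Matrix.traceLinearMap (Fin 3) ℝ ℝ ∘ₗ LinearMap.mulLeft ℝ A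
  exact (LinearMap.toContinuousLinearMap φ).hasFDerivAt.comp_hasDerivAt (0 : ℝ) h

lemma trace_transpose_mul_comm (A B : Mat3) :
    Matrix.trace (A.transpose * B) = Matrix.trace (B.transpose * A) := by
  rw [← Matrix.trace_transpose, Matrix.transpose_mul, Matrix.transpose_transpose]

/-- Cosine of the rotation angle of `y⁻¹ x`. -/
noncomputable def cosAngle (x y : Mat3) : ℝ := (Matrix.trace (y.transpose * x) - 1) / 2

/-- The matrix of the rotation attached to the quaternion with components `q`. -/
def quatMat (q : Fin 4 → ℝ) : Mat3 :=
  !![q 0 ^ 2 + q 1 ^ 2 - q 2 ^ 2 - q 3 ^ 2, 2 * (q 1 * q 2 - q 0 * q 3), 2 * (q 1 * q 3 + q 0 * q 2);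
    2 * (q 1 * q 2 + q 0 * q 3), q 0 ^ 2 - q 1 ^ 2 + q 2 ^ 2 - q 3 ^ 2, 2 * (q 2 * q 3 - q 0 * q 1);
    2 * (q 1 * q 3 - q 0 * q 2), 2 * (q 2 * q 3 + q 0 * q 1), q 0 ^ 2 - q 1 ^ 2 - q 2 ^ 2 + q 3 ^ 2]

/-- Four times the rank one matrix `qⱼ qₖ` of the quaternions lifting a rotation. -/
def quatGram (z : Mat3) : Fin 4 → Fin 4 → ℝ :=
  ![![1 + z 0 0 + z 1 1 + z 2 2, z 2 1 - z 1 2, z 0 2 - z 2 0, z 1 0 - z 0 1],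
    ![z 2 1 - z 1 2, 1 + z 0 0 - z 1 1 - z 2 2, z 0 1 + z 1 0, z 0 2 + z 2 0],
    ![z 0 2 - z 2 0, z 0 1 + z 1 0, 1 - z 0 0 + z 1 1 - z 2 2, z 1 2 + z 2 1],
    ![z 1 0 - z 0 1, z 0 2 + z 2 0, z 1 2 + z 2 1, 1 - z 0 0 - z 1 1 + z 2 2]]

lemma IsSO3.transpose_eq_adjugate {z : Mat3} (hz : IsSO3 z) : z.transpose = z.adjugate := by
  have h := Matrix.mul_adjugate z
  rw [hz.2, one_smul] at h
  calc z.transpose = z.transpose * (z * z.adjugate) := by rw [h, mul_one]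
    _ = z.adjugate := by rw [← mul_assoc, hz.1, one_mul]

lemma quatGram_rank_one {z : Mat3} (hz : IsSO3 z) (i j k : Fin 4) :
    quatGram z i i * quatGram z j k = quatGram z i j * quatGram z i k := by
  have h1 (a b) := congrFun (congrFun hz.1 a) b
  have h2 (a b) := congrFun (congrFun hz.mul_transpose a) b
  have h3 (a b) := congrFun (congrFun hz.transpose_eq_adjugate a) b
  simp only [Matrix.adjugate_fin_three, Matrix.mul_apply, Matrix.transpose_apply,
    Fin.sum_univ_three] at h1 h2 h3
  have a00 := h1 0 0
  have a01 := h1 0 1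
  have a02 := h1 0 2
  have a11 := h1 1 1
  have a12 := h1 1 2
  have a22 := h1 2 2
  have b00 := h2 0 0
  have b01 := h2 0 1
  have b02 := h2 0 2
  have b11 := h2 1 1
  have b12 := h2 1 2
  have b22 := h2 2 2
  have c00 := h3 0 0
  have c01 := h3 0 1
  have c02 := h3 0 2
  have c10 := h3 1 0
  have c11 := h3 1 1
  have c12 := h3 1 2
  have c20 := h3 2 0
  have c21 := h3 2 1
  have c22 := h3 2 2
  clear h1 h2 h3
  simp at a00 a01 a02 a11 a12 a22 b00 b01 b02 b11 b12 b22 c00 c01 c02 c10 c11 c12 c20 c21 c22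
  fin_cases i <;> fin_cases j <;> fin_cases k <;> simp [quatGram] <;> linarith

lemma IsSO3.exists_quat {z : Mat3} (hz : IsSO3 z) :
    ∃ q : Fin 4 → ℝ, ∑ i, q i ^ 2 = 1 ∧ z = quatMat q := by
  have hsum : ∑ i, quatGram z i i = 4 := by
    simp [Fin.sum_univ_four, quatGram]; ring
  obtain ⟨i, hi⟩ : ∃ i, 0 < quatGram z i i := by
    by_contra! h
    have := Finset.sum_nonpos fun i (_ : i ∈ Finset.univ) => h i
    linarith
  have hq : ∀ j k, 4 * (quatGram z i j / (2 * √(quatGram z i i)) *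
      (quatGram z i k / (2 * √(quatGram z i i)))) = quatGram z j k := by
    intro j k
    have h2 : √(quatGram z i i) ≠ 0 := (Real.sqrt_pos.2 hi).ne'
    rw [div_mul_div_comm, ← quatGram_rank_one hz i j k]
    field_simp
    rw [Real.sq_sqrt hi.le]
    ring
  generalize hqd : (fun j => quatGram z i j / (2 * √(quatGram z i i))) = q
  have hq' : ∀ j k, 4 * (q j * q k) = quatGram z j k := by
    rw [← hqd]; exact hq
  refine ⟨q, ?_, ?_⟩
  · have : ∑ i, q i ^ 2 = (∑ i, quatGram z i i) / 4 := by
      rw [Finset.sum_div]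
      exact Finset.sum_congr rfl fun i _ => by rw [← hq' i i]; ring
    rw [this, hsum]; norm_num
  · have h00 := hq' 0 0
    have h01 := hq' 0 1
    have h02 := hq' 0 2
    have h03 := hq' 0 3
    have h11 := hq' 1 1
    have h12 := hq' 1 2
    have h13 := hq' 1 3
    have h22 := hq' 2 2
    have h23 := hq' 2 3
    have h33 := hq' 3 3
    simp [quatGram] at h00 h01 h02 h03 h11 h12 h13 h22 h23 h33
    ext a b
    fin_cases a <;> fin_cases b <;> simp [quatMat] <;> linarith

lemma trace_quatMat_mul (p q : Fin 4 → ℝ) (hp : ∑ i, p i ^ 2 = 1) (hq : ∑ i, q i ^ 2 = 1) :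
    1 + Matrix.trace ((quatMat p).transpose * quatMat q) = 4 * (∑ i, p i * q i) ^ 2 := by
  rw [Fin.sum_univ_four] at hp hq ⊢
  have h0 : (p 0 ^ 2 + p 1 ^ 2 + p 2 ^ 2 + p 3 ^ 2) * (q 0 ^ 2 + q 1 ^ 2 + q 2 ^ 2 + q 3 ^ 2) = 1 := by
    rw [hp, hq, one_mul]
  rw [← h0]
  simp [Matrix.trace_fin_three, Matrix.mul_apply, Fin.sum_univ_three, quatMat]
  ring

lemma IsSO3.trace_mem {z : Mat3} (hz : IsSO3 z) : -1 ≤ Matrix.trace z ∧ Matrix.trace z ≤ 3 := by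
  obtain ⟨q, hq, rfl⟩ := hz.exists_quat
  rw [Fin.sum_univ_four] at hq
  simp [Matrix.trace_fin_three, quatMat]
  constructor <;> nlinarith [sq_nonneg (q 0), sq_nonneg (q 1), sq_nonneg (q 2), sq_nonneg (q 3)]

lemma cosAngle_mem {x y : Mat3} (hx : IsSO3 x) (hy : IsSO3 y) :
    -1 ≤ cosAngle x y ∧ cosAngle x y ≤ 1 := by
  obtain ⟨h1, h2⟩ := (hy.transpose.mul hx).trace_mem
  unfold cosAngle
  constructor <;> linarith

lemma cos_rotAngle {x y : Mat3} (hx : IsSO3 x) (hy : IsSO3 y) :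
    Real.cos (rotAngle (y⁻¹ * x)) = cosAngle x y := by
  obtain ⟨h1, h2⟩ := cosAngle_mem hx hy
  rw [hy.inv_eq, rotAngle]
  exact Real.cos_arccos h1 h2

lemma sigmaK_eq (N : ℕ) {x y : Mat3} (hx : IsSO3 x) (hy : IsSO3 y) :
    sigmaK 8 N x y = (kerPoly N).eval (cosAngle x y) := by
  rw [sigmaK, sigmaT_eq, cos_rotAngle hx hy]

lemma hasDerivAt_cosAngle_left (x y : Mat3) (i : Fin 3) :
    HasDerivAt (fun t : ℝ => cosAngle (x * NormedSpace.exp (t • Lgen i)) y)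
      (Matrix.trace (y.transpose * x * Lgen i) / 2) 0 := by
  have := ((hasDerivAt_trace_mul_exp (y.transpose * x) (Lgen i)).sub_const 1).div_const 2
  simpa only [cosAngle, Matrix.mul_assoc] using this

lemma cosAngle_comm (x y : Mat3) : cosAngle x y = cosAngle y x := by
  rw [cosAngle, cosAngle, trace_transpose_mul_comm]

lemma Xx_sigmaK (N : ℕ) {x y : Mat3} (hx : IsSO3 x) (hy : IsSO3 y) (i : Fin 3) :
    Xx i (sigmaK 8 N) x y = (kerPoly N).derivative.eval (cosAngle x y) *
      (Matrix.trace (y.transpose * x * Lgen i) / 2) := by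
  have h1 : (fun t : ℝ => sigmaK 8 N (x * NormedSpace.exp (t • Lgen i)) y) = fun t : ℝ =>
      (kerPoly N).eval (cosAngle (x * NormedSpace.exp (t • Lgen i)) y) :=
    funext fun t => sigmaK_eq N (hx.mul (isSO3_exp_Lgen t i)) hy
  have h2 := ((kerPoly N).hasDerivAt _).comp (0 : ℝ) (hasDerivAt_cosAngle_left x y i)
  simp only [zero_smul, NormedSpace.exp_zero, mul_one] at h2
  rw [Xx, h1]
  exact h2.deriv

lemma Xy_sigmaK (N : ℕ) {x y : Mat3} (hx : IsSO3 x) (hy : IsSO3 y) (i : Fin 3) :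
    Xy i (sigmaK 8 N) x y = (kerPoly N).derivative.eval (cosAngle x y) *
      (Matrix.trace (x.transpose * y * Lgen i) / 2) := by
  have h1 : (fun t : ℝ => sigmaK 8 N x (y * NormedSpace.exp (t • Lgen i))) = fun t : ℝ =>
      (kerPoly N).eval (cosAngle (y * NormedSpace.exp (t • Lgen i)) x) :=
    funext fun t => by rw [sigmaK_eq N hx (hy.mul (isSO3_exp_Lgen t i)), cosAngle_comm]
  have h2 := ((kerPoly N).hasDerivAt _).comp (0 : ℝ) (hasDerivAt_cosAngle_left y x i)
  simp only [zero_smul, NormedSpace.exp_zero, mul_one] at h2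
  rw [Xy, h1, cosAngle_comm x y]
  exact h2.deriv

lemma Xx_Xy_sigmaK (N : ℕ) {x y : Mat3} (hx : IsSO3 x) (hy : IsSO3 y) (i j : Fin 3) :
    Xx j (Xy i (sigmaK 8 N)) x y =
      (kerPoly N).derivative.derivative.eval (cosAngle x y) *
        (Matrix.trace (y.transpose * x * Lgen j) / 2) *
        (Matrix.trace (x.transpose * y * Lgen i) / 2) +
      (kerPoly N).derivative.eval (cosAngle x y) *
        (Matrix.trace ((y * Lgen i).transpose * x * Lgen j) / 2) := by
  have h1 : (fun t : ℝ => Xy i (sigmaK 8 N) (x * NormedSpace.exp (t • Lgen j)) y) = fun t : ℝ =>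
      (kerPoly N).derivative.eval (cosAngle (x * NormedSpace.exp (t • Lgen j)) y) *
        (Matrix.trace ((y * Lgen i).transpose * x * NormedSpace.exp (t • Lgen j)) / 2) := by
    funext t
    rw [Xy_sigmaK N (hx.mul (isSO3_exp_Lgen t j)) hy, Matrix.mul_assoc _ y,
      trace_transpose_mul_comm, Matrix.mul_assoc]
  have h2 := (((kerPoly N).derivative.hasDerivAt _).comp (0 : ℝ)
    (hasDerivAt_cosAngle_left x y j)).mul
    ((hasDerivAt_trace_mul_exp ((y * Lgen i).transpose * x) (Lgen j)).div_const 2)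
  simp only [zero_smul, NormedSpace.exp_zero, mul_one, Function.comp] at h2
  rw [Xx, h1]
  refine h2.deriv.trans ?_
  rw [Matrix.mul_assoc x.transpose, trace_transpose_mul_comm x]

lemma trace_quatMat_Lgen (q : Fin 4 → ℝ) (i : Fin 3) :
    Matrix.trace (quatMat q * Lgen i) / 2 = -(2 * q 0 * q i.succ) := by
  fin_cases i <;> simp [Matrix.trace_fin_three, quatMat, Lgen] <;>
    ring

lemma trace_quatMat_transpose_Lgen (q : Fin 4 → ℝ) (i : Fin 3) :
    Matrix.trace ((quatMat q).transpose * Lgen i) / 2 = 2 * q 0 * q i.succ := by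
  fin_cases i <;> simp [Matrix.trace_fin_three, Matrix.mul_apply, Fin.sum_univ_three, quatMat, Lgen] <;>
    ring

lemma trace_Lgen_quatMat_Lgen (q : Fin 4 → ℝ) {i j : Fin 3} (hij : i ≠ j) :
    ∃ (k : Fin 3) (s : ℝ), (s = 1 ∨ s = -1) ∧
      Matrix.trace ((Lgen i).transpose * quatMat q * Lgen j) / 2 =
        -(q i.succ * q j.succ) + s * (q 0 * q k.succ) := by
  have key : ∀ (i j k : Fin 3), (i, j, k) = (1, 0, 2) ∨ (i, j, k) = (0, 2, 1) ∨
      (i, j, k) = (2, 1, 0) → Matrix.trace ((Lgen i).transpose * quatMat q * Lgen j) / 2 =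
        -(q i.succ * q j.succ) + 1 * (q 0 * q k.succ) ∧
      Matrix.trace ((Lgen j).transpose * quatMat q * Lgen i) / 2 =
        -(q j.succ * q i.succ) + -1 * (q 0 * q k.succ) := by
    rintro i j k (h | h | h) <;> obtain ⟨rfl, rfl, rfl⟩ : _ ∧ _ ∧ _ := by simpa using h
    all_goals
      constructor <;>
        simp [Matrix.trace_fin_three, Matrix.mul_apply, Fin.sum_univ_three, quatMat, Lgen] <;> ring
  fin_cases i <;> fin_cases j
  · exact absurd rfl hij
  · exact ⟨2, -1, Or.inr rfl, (key 1 0 2 (by simp)).2⟩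
  · exact ⟨1, 1, Or.inl rfl, (key 0 2 1 (by simp)).1⟩
  · exact ⟨2, 1, Or.inl rfl, (key 1 0 2 (by simp)).1⟩
  · exact absurd rfl hij
  · exact ⟨0, -1, Or.inr rfl, (key 2 1 0 (by simp)).2⟩
  · exact ⟨1, -1, Or.inr rfl, (key 0 2 1 (by simp)).2⟩
  · exact ⟨0, 1, Or.inl rfl, (key 2 1 0 (by simp)).1⟩
  · exact absurd rfl hij

/-- The mixed second derivative of the kernel in quaternion coordinates, multiplied by the
squared length `V` of the vector part. -/
lemma mixed_deriv_bound (q : Fin 4 → ℝ) (hq : ∑ i, q i ^ 2 = 1) (i j : Fin 3) {p₁ p₂ V σ : ℝ}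
    (hV : V = q 1 ^ 2 + q 2 ^ 2 + q 3 ^ 2) (hσ : σ = 4 * q 0 ^ 2 * V * p₂ - (1 - 2 * V) * p₁) :
    |V * (p₂ * (Matrix.trace (quatMat q * Lgen j) / 2) *
        (Matrix.trace ((quatMat q).transpose * Lgen i) / 2) +
      p₁ * (Matrix.trace ((Lgen i).transpose * quatMat q * Lgen j) / 2))| ≤
      V * (|σ| + 2 * |p₁ * q 0|) := by
  rw [Fin.sum_univ_four] at hq
  have hV1 : q 0 ^ 2 = 1 - V := by linarith
  have hV0 : 0 ≤ V := by rw [hV]; positivity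
  have hq0 : |q 0| ≤ 1 := abs_le_one_iff_mul_self_le_one.2 (by nlinarith)
  have hqk : ∀ k : Fin 3, |q k.succ| ≤ 1 := fun k => by
    refine abs_le_one_iff_mul_self_le_one.2 ?_
    fin_cases k <;> simp <;>
      nlinarith [sq_nonneg (q 0), sq_nonneg (q 1), sq_nonneg (q 2), sq_nonneg (q 3)]
  have hprod : ∀ k l : Fin 3, |q k.succ * q l.succ| ≤ V := fun k l => by
    rw [abs_le, hV]
    fin_cases k <;> fin_cases l <;> simp <;> constructor <;>
      nlinarith [sq_nonneg (q 1 - q 2), sq_nonneg (q 1 - q 3), sq_nonneg (q 2 - q 3),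
        sq_nonneg (q 1 + q 2), sq_nonneg (q 1 + q 3), sq_nonneg (q 2 + q 3),
        sq_nonneg (q 1), sq_nonneg (q 2), sq_nonneg (q 3)]
  have fin : ∀ w : ℝ, |w| ≤ 2 * V →
      |-σ * (q i.succ * q j.succ) + p₁ * q 0 * w| ≤ V * (|σ| + 2 * |p₁ * q 0|) := fun w hw => by
    refine (abs_add_le _ _).trans ?_
    rw [abs_mul, abs_neg, abs_mul (p₁ * q 0)]
    have h1 := mul_le_mul_of_nonneg_left (hprod i j) (abs_nonneg σ)
    have h2 := mul_le_mul_of_nonneg_left hw (abs_nonneg (p₁ * q 0))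
    linarith
  have diag : ∀ k : Fin 3, |q 0 * (V - q k.succ * q k.succ)| ≤ 2 * V := fun k => by
    have h1 := hprod k k
    have h2 : |V - q k.succ * q k.succ| ≤ 2 * V := by
      rw [abs_le] at h1 ⊢
      constructor <;> linarith
    rw [abs_mul]
    calc _ ≤ 1 * (2 * V) := mul_le_mul hq0 h2 (abs_nonneg _) zero_le_one
      _ = _ := one_mul _
  have off : ∀ k l m : Fin 3, |q 0 * (q k.succ * q l.succ) + V * q m.succ| ≤ 2 * V ∧
      |q 0 * (q k.succ * q l.succ) - V * q m.succ| ≤ 2 * V := fun k l m => by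
    have h1 : |q 0 * (q k.succ * q l.succ)| ≤ 1 * V := by
      rw [abs_mul]
      exact mul_le_mul hq0 (hprod k l) (abs_nonneg _) zero_le_one
    have h2 : |V * q m.succ| ≤ V * 1 := by
      rw [abs_mul, abs_of_nonneg hV0]
      exact mul_le_mul_of_nonneg_left (hqk m) hV0
    rw [abs_le] at h1 h2
    constructor <;> rw [abs_le] <;> constructor <;> linarith
  rw [trace_quatMat_Lgen, trace_quatMat_transpose_Lgen]
  have hD : ∀ w : ℝ, Matrix.trace ((Lgen i).transpose * quatMat q * Lgen j) / 2 * V =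
      -(V * (q i.succ * q j.succ)) + q 0 * (w + q 0 * (q i.succ * q j.succ)) →
      |w| ≤ 2 * V → |V * (p₂ * -(2 * q 0 * q j.succ) * (2 * q 0 * q i.succ) +
      p₁ * (Matrix.trace ((Lgen i).transpose * quatMat q * Lgen j) / 2))| ≤
      V * (|σ| + 2 * |p₁ * q 0|) := by
    intro w hw hb
    convert fin w hb using 2
    rw [hσ]
    linear_combination p₁ * hw + (p₁ * q i.succ * q j.succ) * hV1
  rcases eq_or_ne i j with rfl | hij
  · refine hD _ ?_ (diag i)
    have : Matrix.trace ((Lgen i).transpose * quatMat q * Lgen i) / 2 =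
        q 0 ^ 2 - q i.succ ^ 2 := by
      fin_cases i <;>
        simp [Matrix.trace_fin_three, Matrix.mul_apply, Fin.sum_univ_three, quatMat, Lgen] <;> ring
    rw [this]
    ring
  · obtain ⟨k, s, hs, hk⟩ := trace_Lgen_quatMat_Lgen q hij
    obtain ⟨o1, o2⟩ := off i j k
    refine hD (-(q 0 * (q i.succ * q j.succ)) + s * (V * q k.succ)) ?_ ?_
    · rw [hk]; ring
    · rw [abs_le] at o1 o2 ⊢
      rcases hs with rfl | rfl <;> constructor <;> linarith

/-- Bounds for the blocks of the interpolation matrix at separated points. -/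
lemma block_bounds {N : ℕ} (hN : 20 ≤ N) {x y : Mat3} (hx : IsSO3 x) (hy : IsSO3 y)
    (hD : (24 / ((N : ℝ) + 1)) ^ 2 ≤ 2 - 2 * cosAngle x y) {W : ℝ}
    (hW : W = (2 - 2 * cosAngle x y) ^ 4 * gnorm 8 N) :
    W * |sigmaK 8 N x y| ≤ 16 / ((N : ℝ) + 1) ^ 7 ∧
    (∀ j, W * |Xx j (sigmaK 8 N) x y| ≤ 32 / ((N : ℝ) + 1) ^ 6) ∧
    (∀ i, W * |Xy i (sigmaK 8 N) x y| ≤ 32 / ((N : ℝ) + 1) ^ 6) ∧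
    (∀ i j, W * |Xx j (Xy i (sigmaK 8 N)) x y| ≤ 74 / ((N : ℝ) + 1) ^ 5) := by
  have hk : (0 : ℝ) < N + 1 := by positivity
  have hg := gnorm_pos hN
  have hW0 : 0 ≤ W := by rw [hW]; positivity
  obtain ⟨hc1, hc2⟩ := cosAngle_mem hx hy
  obtain ⟨b0, b1, b2⟩ := kerPoly_bounds hN hc1 hc2
  obtain ⟨q, hq, hz⟩ := (hy.transpose.mul hx).exists_quat
  have hzt : x.transpose * y = (quatMat q).transpose := by
    rw [← hz, Matrix.transpose_mul, Matrix.transpose_transpose]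
  have hq' := hq
  rw [Fin.sum_univ_four] at hq'
  obtain ⟨V, hV⟩ : ∃ V, V = q 1 ^ 2 + q 2 ^ 2 + q 3 ^ 2 := ⟨_, rfl⟩
  have hc : cosAngle x y = 1 - 2 * V := by
    rw [cosAngle, hz, hV]
    simp [Matrix.trace_fin_three, quatMat]
    linarith
  have hq0 : q 0 ^ 2 = 1 - V := by linarith
  have hs : 1 - cosAngle x y ^ 2 = 4 * q 0 ^ 2 * V := by rw [hc, hq0]; ring
  have hVk : (12 / ((N : ℝ) + 1)) ^ 2 ≤ V := by
    rw [hc] at hD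
    have : (24 / ((N : ℝ) + 1)) ^ 2 = 4 * (12 / ((N : ℝ) + 1)) ^ 2 := by ring
    linarith
  have hV0 : 0 < V := lt_of_lt_of_le (by positivity) hVk
  have hqj : ∀ j : Fin 3, |2 * q 0 * q j.succ| ≤ √(1 - cosAngle x y ^ 2) := fun j => by
    refine Real.abs_le_sqrt ?_
    have : q j.succ ^ 2 ≤ V := by
      rw [hV]
      fin_cases j <;> simp <;> nlinarith [sq_nonneg (q 1), sq_nonneg (q 2), sq_nonneg (q 3)]
    rw [hs]
    nlinarith [mul_le_mul_of_nonneg_left this (sq_nonneg (2 * q 0))]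
  have hfirst : ∀ j : Fin 3, W * |(kerPoly N).derivative.eval (cosAngle x y) *
      (2 * q 0 * q j.succ)| ≤ 32 / ((N : ℝ) + 1) ^ 6 := fun j => by
    rw [abs_mul]
    refine le_trans ?_ b1
    have := mul_le_mul_of_nonneg_left (mul_le_mul_of_nonneg_left (hqj j)
      (abs_nonneg ((kerPoly N).derivative.eval (cosAngle x y)))) hW0
    refine this.trans (le_of_eq ?_)
    rw [hW]; ring
  refine ⟨?_, fun j => ?_, fun i => ?_, fun i j => ?_⟩
  · rw [sigmaK_eq N hx hy, hW]
    refine le_trans (le_of_eq ?_) b0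
    ring
  · rw [Xx_sigmaK N hx hy, hz, trace_quatMat_Lgen, mul_neg, abs_neg]
    exact hfirst j
  · rw [Xy_sigmaK N hx hy, hzt, trace_quatMat_transpose_Lgen]
    exact hfirst i
  · have e : (y * Lgen i).transpose * x = (Lgen i).transpose * quatMat q := by
      rw [Matrix.transpose_mul, Matrix.mul_assoc, hz]
    rw [Xx_Xy_sigmaK N hx hy, hz, hzt, e]
    set p₁ := (kerPoly N).derivative.eval (cosAngle x y)
    set p₂ := (kerPoly N).derivative.derivative.eval (cosAngle x y)
    have hm := mixed_deriv_bound q hq i j (p₁ := p₁) (p₂ := p₂) hV rfl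
    rw [abs_mul, abs_of_pos hV0] at hm
    have hm' := le_of_mul_le_mul_left hm hV0
    rw [← hs, ← hc] at hm'
    have h24 : |24 / ((N : ℝ) + 1) * q 0| ≤ √(1 - cosAngle x y ^ 2) := by
      refine Real.abs_le_sqrt ?_
      rw [hs]
      have := mul_le_mul_of_nonneg_left hVk (by positivity : 0 ≤ 4 * q 0 ^ 2)
      refine le_trans (le_of_eq ?_) this
      ring
    rw [abs_mul, abs_of_pos (by positivity : 0 < 24 / ((N : ℝ) + 1))] at h24
    have h2 : W * (2 * |p₁ * q 0|) ≤ (32 / 12) / ((N : ℝ) + 1) ^ 5 := by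
      have h3 : 2 * |p₁ * q 0| ≤ ((N : ℝ) + 1) / 12 * (|p₁| * √(1 - cosAngle x y ^ 2)) := by
        rw [abs_mul]
        have := mul_le_mul_of_nonneg_left h24
          (by positivity : 0 ≤ ((N : ℝ) + 1) / 12 * |p₁|)
        calc _ = ((N : ℝ) + 1) / 12 * |p₁| * (24 / ((N : ℝ) + 1) * |q 0|) := by field_simp; ring
          _ ≤ _ := this
          _ = _ := by ring
      calc _ ≤ W * (((N : ℝ) + 1) / 12 * (|p₁| * √(1 - cosAngle x y ^ 2))) :=
            mul_le_mul_of_nonneg_left h3 hW0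
        _ = ((N : ℝ) + 1) / 12 * ((2 - 2 * cosAngle x y) ^ 4 *
            (|p₁| * √(1 - cosAngle x y ^ 2)) * gnorm 8 N) := by rw [hW]; ring
        _ ≤ ((N : ℝ) + 1) / 12 * (32 / ((N : ℝ) + 1) ^ 6) :=
            mul_le_mul_of_nonneg_left b1 (by positivity)
        _ = _ := by field_simp
    have h4 : W * |(1 - cosAngle x y ^ 2) * p₂ - cosAngle x y * p₁| ≤ 71 / ((N : ℝ) + 1) ^ 5 := by
      refine le_trans (le_of_eq ?_) b2
      rw [hW]; ring
    have h5 := mul_le_mul_of_nonneg_left hm' hW0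
    rw [mul_add] at h5
    have h6 : 71 / ((N : ℝ) + 1) ^ 5 + (32 / 12) / ((N : ℝ) + 1) ^ 5 ≤ 74 / ((N : ℝ) + 1) ^ 5 := by
      rw [← add_div]
      gcongr
      norm_num
    linarith

lemma cosAngle_self {x : Mat3} (hx : IsSO3 x) : cosAngle x x = 1 := by
  rw [cosAngle, hx.1]
  simp
  norm_num

lemma trace_Lgen (i : Fin 3) : Matrix.trace (Lgen i) = 0 := by
  fin_cases i <;> simp [Matrix.trace_fin_three, Lgen]

lemma trace_Lgen_mul (i j : Fin 3) :
    Matrix.trace ((Lgen i).transpose * Lgen j) / 2 = if i = j then 1 else 0 := by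
  fin_cases i <;> fin_cases j <;>
    simp [Matrix.trace_fin_three, Matrix.mul_apply, Fin.sum_univ_three, Lgen]

lemma block_diag {N : ℕ} (hN : 20 ≤ N) {x : Mat3} (hx : IsSO3 x) :
    sigmaK 8 N x x = 1 ∧ (∀ j, Xx j (sigmaK 8 N) x x = 0) ∧ (∀ i, Xy i (sigmaK 8 N) x x = 0) ∧
    (∀ i j, Xx j (Xy i (sigmaK 8 N)) x x =
      if i = j then (∑ n ∈ Finset.Icc (-(N : ℤ)) N, (n : ℝ) ^ 2 * coeffG N n) / gnorm 8 N
      else 0) := by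
  refine ⟨?_, fun j => ?_, fun i => ?_, fun i j => ?_⟩
  · rw [sigmaK_eq N hx hx, cosAngle_self hx, kerPoly_one hN]
  · rw [Xx_sigmaK N hx hx, hx.1, one_mul, trace_Lgen, zero_div, mul_zero]
  · rw [Xy_sigmaK N hx hx, hx.1, one_mul, trace_Lgen, zero_div, mul_zero]
  · have e : (x * Lgen i).transpose * x = (Lgen i).transpose := by
      rw [Matrix.transpose_mul, Matrix.mul_assoc, hx.1, mul_one]
    rw [Xx_Xy_sigmaK N hx hx, hx.1, one_mul, trace_Lgen, zero_div, mul_zero, zero_mul, zero_add, e,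
      trace_Lgen_mul, cosAngle_self hx, kerPoly_deriv_one]
    split_ifs <;> simp

open MeasureTheory in
/-- Volume bound for the number of `r`-separated points in a ball of `ℝ⁴`. -/
lemma card_separated_le {ι : Type*} [DecidableEq ι] (s : Finset ι)
    (p : ι → EuclideanSpace ℝ (Fin 4)) (o : EuclideanSpace ℝ (Fin 4)) {r R : ℝ} (hr : 0 < r)
    (hR : 0 ≤ R) (hsep : ∀ i ∈ s, ∀ j ∈ s, i ≠ j → r ≤ dist (p i) (p j))
    (ho : ∀ i ∈ s, r ≤ dist (p i) o) (hb : ∀ i ∈ s, dist (p i) o ≤ R) :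
    (s.card : ℝ) ≤ (2 * (R / r) + 1) ^ 4 - 1 := by
  let c : Option ι → EuclideanSpace ℝ (Fin 4) := fun i => i.elim o p
  let S : Finset (Option ι) := Finset.insertNone s
  have hS : S.card = s.card + 1 := Finset.card_insertNone s
  have hdisj : (S : Set (Option ι)).PairwiseDisjoint fun i => Metric.ball (c i) (r / 2) := by
    intro i hi j hj hij
    refine Metric.ball_disjoint_ball ?_
    rw [add_halves]
    simp only [S, Finset.mem_coe, Finset.mem_insertNone] at hi hj
    rcases i with _ | i <;> rcases j with _ | j
    · exact absurd rfl hij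
    · simpa [c, dist_comm] using ho j (hj j rfl)
    · simpa [c] using ho i (hi i rfl)
    · exact hsep i (hi i rfl) j (hj j rfl) fun h => hij (by rw [h])
  have hsub : (⋃ i ∈ S, Metric.ball (c i) (r / 2)) ⊆ Metric.ball o (R + r / 2) := by
    refine Set.iUnion₂_subset fun i hi => Metric.ball_subset_ball' ?_
    simp only [S, Finset.mem_insertNone] at hi
    rcases i with _ | i
    · simp [c, hR]
    · have := hb i (hi i rfl)
      simp only [c, Option.elim]
      linarith
  have hvol := measure_mono (μ := volume) hsub
  rw [measure_biUnion_finset hdisj fun _ _ => measurableSet_ball,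
    Finset.sum_congr rfl fun i _ => Measure.addHaar_ball volume (c i) (half_pos hr).le,
    Measure.addHaar_ball volume o (by positivity), Finset.sum_const, nsmul_eq_mul, hS,
    ← mul_assoc, finrank_euclideanSpace_fin] at hvol
  have hpos : 0 < volume (Metric.ball (0 : EuclideanSpace ℝ (Fin 4)) 1) :=
    Metric.measure_ball_pos _ _ one_pos
  have hvol' := (ENNReal.mul_le_mul_iff_left hpos.ne' measure_ball_lt_top.ne).1 hvol
  rw [← ENNReal.ofReal_natCast, ← ENNReal.ofReal_mul (by positivity),
    ENNReal.ofReal_le_ofReal_iff (by positivity)] at hvol'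
  have h1 : R + r / 2 = (2 * (R / r) + 1) * (r / 2) := by field_simp
  rw [h1, mul_pow] at hvol'
  have := le_of_mul_le_mul_right hvol' (by positivity)
  push_cast at this
  linarith

open MeasureTheory in
/-- Layer cake bound for a sum of negative powers under a quartic counting bound. -/
lemma sum_inv_pow_le {ι : Type*} (s : Finset ι) (y : ι → ℝ) (hy : ∀ i ∈ s, 1 ≤ y i)
    (hcount : ∀ t : ℝ, 1 ≤ t → ((s.filter fun i => y i ≤ t).card : ℝ) ≤ (2 * t + 1) ^ 4 - 1)
    {p : ℕ} (hp : 5 ≤ p) :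
    ∑ i ∈ s, (y i ^ p)⁻¹ ≤
      p * (16 / (p - 4) + 32 / (p - 3) + 24 / (p - 2) + 8 / (p - 1)) := by
  have hp' : (5 : ℝ) ≤ p := by exact_mod_cast hp
  let g : ℝ → ℝ := fun t => p * t ^ (-(p : ℝ) - 1)
  have hI : ∀ a : ℝ, a < -1 → IntegrableOn (fun t : ℝ => t ^ a) (Set.Ioi 1) := fun a ha =>
    integrableOn_Ioi_rpow_of_lt ha one_pos
  have hgI : IntegrableOn g (Set.Ioi 1) := (hI _ (by linarith)).const_mul _
  have hy' : ∀ i ∈ s, (y i ^ p)⁻¹ = ∫ t in Set.Ioi (1 : ℝ), (Set.Ioi (y i)).indicator g t := by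
    intro i hi
    have h0 : 0 < y i := by linarith [hy i hi]
    rw [setIntegral_indicator measurableSet_Ioi, Set.inter_eq_self_of_subset_right
      (Set.Ioi_subset_Ioi (hy i hi)), integral_const_mul,
      integral_Ioi_rpow_of_lt (by linarith) h0]
    have : -(p : ℝ) - 1 + 1 = -p := by ring
    rw [this, Real.rpow_neg h0.le, Real.rpow_natCast]
    field_simp
  have hF : ∀ t ∈ Set.Ioi (1 : ℝ), ((2 * t + 1) ^ 4 - 1) * g t =
      p * (16 * t ^ (3 - p : ℝ) + 32 * t ^ (2 - p : ℝ) + 24 * t ^ (1 - p : ℝ) +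
        8 * t ^ (-p : ℝ)) := by
    intro t ht
    have h0 : 0 < t := lt_trans one_pos ht
    have e : ∀ n : ℕ, t ^ ((n : ℝ) - 1 - p) = t ^ n * t ^ (-(p : ℝ) - 1) := fun n => by
      rw [← Real.rpow_natCast t n, ← Real.rpow_add h0]
      congr 1; ring
    have e4 : t ^ (3 - p : ℝ) = t ^ 4 * t ^ (-(p : ℝ) - 1) := by convert e 4 using 2; push_cast; ring
    have e3 : t ^ (2 - p : ℝ) = t ^ 3 * t ^ (-(p : ℝ) - 1) := by convert e 3 using 2; push_cast; ring
    have e2 : t ^ (1 - p : ℝ) = t ^ 2 * t ^ (-(p : ℝ) - 1) := by convert e 2 using 2; push_cast; ring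
    have e1 : t ^ (-p : ℝ) = t ^ 1 * t ^ (-(p : ℝ) - 1) := by convert e 1 using 2; push_cast; ring
    simp only [g]
    rw [e1, e2, e3, e4]
    ring
  rw [Finset.sum_congr rfl hy', ← integral_finsetSum _ fun i _ => hgI.indicator measurableSet_Ioi]
  have hFI : IntegrableOn (fun t : ℝ => (p : ℝ) * (16 * t ^ (3 - p : ℝ) + 32 * t ^ (2 - p : ℝ) +
      24 * t ^ (1 - p : ℝ) + 8 * t ^ (-p : ℝ))) (Set.Ioi 1) :=
    (((((hI _ (by linarith)).const_mul _).add ((hI _ (by linarith)).const_mul _)).add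
      ((hI _ (by linarith)).const_mul _)).add ((hI _ (by linarith)).const_mul _)).const_mul _
  calc _ ≤ ∫ t in Set.Ioi (1 : ℝ), (p : ℝ) * (16 * t ^ (3 - p : ℝ) + 32 * t ^ (2 - p : ℝ) +
      24 * t ^ (1 - p : ℝ) + 8 * t ^ (-p : ℝ)) := by
        refine setIntegral_mono_on
          (integrable_finsetSum _ fun i _ => hgI.indicator measurableSet_Ioi) hFI
          measurableSet_Ioi fun t ht => ?_
        rw [← hF t ht]
        have h0 : 0 < t := lt_trans one_pos ht
        have hg0 : 0 ≤ g t := by simp only [g]; positivity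
        have h1 : ∑ i ∈ s, (Set.Ioi (y i)).indicator g t ≤
            ∑ i ∈ s, if y i ≤ t then g t else 0 := by
          refine Finset.sum_le_sum fun i _ => ?_
          by_cases h : y i < t
          · rw [Set.indicator_of_mem (Set.mem_Ioi.2 h), if_pos h.le]
          · rw [Set.indicator_of_notMem (by simpa using h)]
            split_ifs <;> simp [hg0]
        refine h1.trans ?_
        rw [← Finset.sum_filter, Finset.sum_const, nsmul_eq_mul]
        exact mul_le_mul_of_nonneg_right (hcount t (le_of_lt ht)) hg0
    _ = _ := by
        have i1 := hI (3 - p) (by linarith)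
        have i2 := hI (2 - p) (by linarith)
        have i3 := hI (1 - p) (by linarith)
        have i4 := hI (-p) (by linarith)
        have i12 : IntegrableOn (fun t : ℝ => 16 * t ^ (3 - p : ℝ) + 32 * t ^ (2 - p : ℝ))
          (Set.Ioi 1) := (i1.const_mul _).add (i2.const_mul _)
        have i123 : IntegrableOn (fun t : ℝ => 16 * t ^ (3 - p : ℝ) + 32 * t ^ (2 - p : ℝ) +
          24 * t ^ (1 - p : ℝ)) (Set.Ioi 1) := i12.add (i3.const_mul _)
        have key : ∀ a b : ℝ, a < -1 → b = -a - 1 →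
            ∫ t in Set.Ioi (1 : ℝ), t ^ a = 1 / b := fun a b ha hb => by
          rw [integral_Ioi_rpow_of_lt ha one_pos, Real.one_rpow, neg_div, ← div_neg, hb]
          congr 1
          ring
        rw [integral_const_mul, integral_add i123 (i4.const_mul _),
          integral_add i12 (i3.const_mul _), integral_add (i1.const_mul _) (i2.const_mul _)]
        simp only [integral_const_mul]
        rw [key (3 - p) (p - 4) (by linarith) (by ring),
          key (2 - p) (p - 3) (by linarith) (by ring),
          key (1 - p) (p - 2) (by linarith) (by ring), key (-p) (p - 1) (by linarith) (by ring)]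
        ring

/-- Lift of a family of rotations to unit quaternions in the hemisphere around a given one. -/
lemma exists_hemisphere_lift {ι : Type*} (x : ι → Mat3) (hx : ∀ b, IsSO3 (x b)) (a : ι) :
    ∃ v : ι → EuclideanSpace ℝ (Fin 4), (∀ b, ‖v b‖ = 1) ∧ (∀ b, 0 ≤ inner ℝ (v b) (v a)) ∧
      ∀ b c, cosAngle (x b) (x c) = 2 * (inner ℝ (v b) (v c)) ^ 2 - 1 := by
  choose q hq hxq using fun b => (hx b).exists_quat
  let Q : ι → EuclideanSpace ℝ (Fin 4) := fun b => WithLp.toLp 2 (q b)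
  have hQ : ∀ b, ‖Q b‖ = 1 := fun b => by
    rw [EuclideanSpace.norm_eq, Real.sqrt_eq_one]
    simpa [Q] using hq b
  have hI : ∀ b c, inner ℝ (Q b) (Q c) = ∑ i, q c i * q b i := fun b c => by
    simp [Q, PiLp.inner_apply]
  have hc : ∀ b c, cosAngle (x b) (x c) = 2 * (inner ℝ (Q b) (Q c)) ^ 2 - 1 := fun b c => by
    have := trace_quatMat_mul (q c) (q b) (hq c) (hq b)
    rw [hI, cosAngle, hxq b, hxq c]
    linarith
  let e : ι → ℝ := fun b => if 0 ≤ inner ℝ (Q b) (Q a) then 1 else -1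
  have he : ∀ b, e b ^ 2 = 1 := fun b => by
    simp only [e]; split_ifs <;> norm_num
  have hea : e a = 1 := if_pos real_inner_self_nonneg
  refine ⟨fun b => e b • Q b, fun b => ?_, fun b => ?_, fun b c => ?_⟩
  · rw [norm_smul, hQ, mul_one, Real.norm_eq_abs, ← Real.sqrt_sq_eq_abs, he, Real.sqrt_one]
  · simp only [hea, one_smul, real_inner_smul_left]
    simp only [e]
    split_ifs with h <;> linarith
  · rw [hc, real_inner_smul_left, real_inner_smul_right, mul_pow, mul_pow, he, he]
    ring

/-- Lower bound for the chordal distance of unit quaternions of well-separated rotations. -/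
lemma dist_lift_ge {k : ℝ} (hk : 21 ≤ k) {x y : Mat3} (hx : IsSO3 x) (hy : IsSO3 y)
    (hsep : 36 / k ≤ rotAngle (y⁻¹ * x)) {v w : EuclideanSpace ℝ (Fin 4)} (hv : ‖v‖ = 1)
    (hw : ‖w‖ = 1) (hc : cosAngle x y = 2 * (inner ℝ v w) ^ 2 - 1) : 17 / k ≤ dist v w := by
  have hk0 : 0 < k := by linarith
  have h9 : 36 / k = 2 * (2 * (9 / k)) := by ring
  have hpos : 0 < 9 / k := by positivity
  have hpi : rotAngle (y⁻¹ * x) ≤ π := Real.arccos_le_pi _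
  have hle : cosAngle x y ≤ Real.cos (36 / k) := by
    rw [← cos_rotAngle hx hy]
    exact Real.cos_le_cos_of_nonneg_of_le_pi (by positivity) hpi hsep
  have hcos0 : 0 ≤ Real.cos (2 * (9 / k)) :=
    Real.cos_nonneg_of_neg_pi_div_two_le_of_le (by linarith [Real.pi_pos]) (by linarith)
  have hin : inner ℝ v w ≤ Real.cos (2 * (9 / k)) := by
    rw [hc, h9, Real.cos_two_mul] at hle
    exact le_of_abs_le (abs_le_of_sq_le_sq (by linarith) hcos0)
  have hcs := Real.cos_two_mul (9 / k)
  have hss := Real.sin_sq_add_cos_sq (9 / k)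
  have h37 : 9 / k ≤ 9 / 21 := by gcongr
  have hsin : 8.5 / k ≤ Real.sin (9 / k) := by
    have h1 := Real.sin_gt_sub_cube hpos
    have h2 : 8.5 / k = 17 / 18 * (9 / k) := by ring
    rw [h2]
    nlinarith [mul_nonneg hpos.le (sub_nonneg.2 h37), mul_nonneg (mul_nonneg hpos.le hpos.le) (sub_nonneg.2 h37)]
  have hd : dist v w ^ 2 = 2 - 2 * inner ℝ v w := by
    rw [dist_eq_norm, norm_sub_sq_real, hv, hw]; ring
  refine le_of_sq_le_sq ?_ dist_nonneg
  have h3 : (17 / k) ^ 2 = 4 * (8.5 / k) ^ 2 := by ring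
  have h4 : (8.5 / k) ^ 2 ≤ Real.sin (9 / k) ^ 2 := by gcongr
  rw [hd, h3]
  nlinarith

lemma inv_pow_four_le {e : ℝ} (he : 0 < e) (he2 : e ^ 2 ≤ 2) :
    ((e ^ 2 * (4 - e ^ 2)) ^ 4)⁻¹ ≤ 1 / 256 * ((e ^ 8)⁻¹ + 7.5 * (e ^ 6)⁻¹) := by
  have h4 : 0 < 4 - e ^ 2 := by linarith
  have h : 1 / 256 * ((e ^ 8)⁻¹ + 7.5 * (e ^ 6)⁻¹) = (1 + 7.5 * e ^ 2) / (256 * e ^ 8) := by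
    field_simp
  rw [h, inv_eq_one_div, div_le_div_iff₀ (by positivity) (by positivity)]
  obtain ⟨t, ht⟩ : ∃ t, e ^ 2 = t := ⟨_, rfl⟩
  have h8 : e ^ 8 = t ^ 4 := by rw [← ht]; ring
  have ht0 : 0 ≤ t := ht ▸ sq_nonneg e
  rw [ht] at he2
  rw [h8, ht, mul_pow]
  have key : 256 ≤ (1 + 7.5 * t) * (4 - t) ^ 4 := by
    have h1 : 0 ≤ 832 - 496 * t + 104 * t ^ 2 - 7.5 * t ^ 3 := by
      nlinarith [mul_nonneg (pow_nonneg ht0 2) (sub_nonneg.2 he2)]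
    nlinarith [mul_nonneg (mul_nonneg ht0 (sub_nonneg.2 he2)) h1]
  nlinarith [mul_le_mul_of_nonneg_left key (pow_nonneg ht0 4)]

/-- Packing bound for the sum of inverse powers of the squared chordal distances. -/
lemma separated_bounds {N M : ℕ} (hN : 20 ≤ N) (x : Fin M → Mat3) (hx : ∀ a, IsSO3 (x a))
    (hsep : ∀ a b, a ≠ b → 36 / ((N : ℝ) + 1) ≤ rotAngle ((x b)⁻¹ * (x a))) (a : Fin M) :
    (∀ b, b ≠ a → (24 / ((N : ℝ) + 1)) ^ 2 ≤ 2 - 2 * cosAngle (x a) (x b)) ∧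
    ∑ b ∈ Finset.univ.erase a, ((2 - 2 * cosAngle (x a) (x b)) ^ 4)⁻¹ ≤
      (504 / 10 ^ 12) * ((N : ℝ) + 1) ^ 8 := by
  have hk : (21 : ℝ) ≤ (N : ℝ) + 1 := by
    have : (20 : ℝ) ≤ N := by exact_mod_cast hN
    linarith
  set k : ℝ := (N : ℝ) + 1 with hkdef
  have hk0 : 0 < k := by linarith
  obtain ⟨v, hv, hva, hvc⟩ := exists_hemisphere_lift x hx a
  have hd : ∀ b c, b ≠ c → 17 / k ≤ dist (v b) (v c) := fun b c h =>
    dist_lift_ge hk (hx b) (hx c) (hsep b c h) (hv b) (hv c) (hvc b c)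
  have hde : ∀ b, dist (v b) (v a) ^ 2 = 2 - 2 * inner ℝ (v b) (v a) := fun b => by
    rw [dist_eq_norm, norm_sub_sq_real, hv, hv]; ring
  have hde2 : ∀ b, dist (v b) (v a) ^ 2 ≤ 2 := fun b => by linarith [hde b, hva b]
  have hce : ∀ b, 2 - 2 * cosAngle (x a) (x b) =
      dist (v b) (v a) ^ 2 * (4 - dist (v b) (v a) ^ 2) := fun b => by
    rw [hvc, real_inner_comm, hde]; ring
  have hr : 0 < 17 / k := by positivity
  constructor
  · intro b hb
    rw [hce]
    have h1 : (17 / k) ^ 2 ≤ dist (v b) (v a) ^ 2 := pow_le_pow_left₀ hr.le (hd b a hb) 2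
    have h2 : (24 / k) ^ 2 = 576 / 289 * (17 / k) ^ 2 := by ring
    nlinarith [hde2 b, sq_nonneg (17 / k), sq_nonneg (dist (v b) (v a))]
  · let y : Fin M → ℝ := fun b => dist (v b) (v a) / (17 / k)
    have hy : ∀ b ∈ Finset.univ.erase a, 1 ≤ y b := fun b hb => by
      rw [le_div_iff₀ hr, one_mul]
      exact hd b a (Finset.ne_of_mem_erase hb)
    have hcount : ∀ t : ℝ, 1 ≤ t →
        (((Finset.univ.erase a).filter fun i => y i ≤ t).card : ℝ) ≤ (2 * t + 1) ^ 4 - 1 := by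
      intro t ht
      have := card_separated_le ((Finset.univ.erase a).filter fun i => y i ≤ t) v (v a) hr
        (R := t * (17 / k)) (by positivity) (fun i _ j _ hij => hd i j hij)
        (fun i hi => hd i a (Finset.ne_of_mem_erase (Finset.mem_filter.1 hi).1))
        (fun i hi => (div_le_iff₀ hr).1 (Finset.mem_filter.1 hi).2)
      rwa [mul_div_cancel_right₀ _ hr.ne'] at this
    have h8 := sum_inv_pow_le _ y hy hcount (p := 8) (by norm_num)
    have h6 := sum_inv_pow_le _ y hy hcount (p := 6) (by norm_num)
    have hterm : ∀ b ∈ Finset.univ.erase a, ((2 - 2 * cosAngle (x a) (x b)) ^ 4)⁻¹ ≤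
        1 / 256 * (k ^ 8 / 17 ^ 8) * (y b ^ 8)⁻¹ + 7.5 / 256 * (k ^ 6 / 17 ^ 6) * (y b ^ 6)⁻¹ := by
      intro b hb
      have hpos : 0 < dist (v b) (v a) := hr.trans_le (hd b a (Finset.ne_of_mem_erase hb))
      rw [hce]
      refine (inv_pow_four_le hpos (hde2 b)).trans (le_of_eq ?_)
      simp only [y]
      field_simp
    refine (Finset.sum_le_sum hterm).trans ?_
    rw [Finset.sum_add_distrib, ← Finset.mul_sum, ← Finset.mul_sum]
    have hk6 : k ^ 6 * 441 ≤ k ^ 8 := by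
      have : (21 : ℝ) ^ 2 ≤ k ^ 2 := by gcongr
      nlinarith [pow_pos hk0 6]
    have hk8 : 0 < k ^ 8 := by positivity
    have c8 : ((8 : ℕ) : ℝ) * (16 / ((8 : ℕ) - 4) + 32 / ((8 : ℕ) - 3) + 24 / ((8 : ℕ) - 2) +
        8 / ((8 : ℕ) - 1)) = 4352 / 35 := by norm_num
    have c6 : ((6 : ℕ) : ℝ) * (16 / ((6 : ℕ) - 4) + 32 / ((6 : ℕ) - 3) + 24 / ((6 : ℕ) - 2) +
        8 / ((6 : ℕ) - 1)) = 788 / 5 := by norm_num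
    rw [c8] at h8
    rw [c6] at h6
    calc _ ≤ 1 / 256 * (k ^ 8 / 17 ^ 8) * (4352 / 35) + 7.5 / 256 * (k ^ 6 / 17 ^ 6) * (788 / 5) := by
          gcongr
      _ ≤ _ := by linarith

/-- Column weights making the interpolation matrix diagonally dominant. -/
noncomputable def colWeight (N : ℕ) : Fin 4 → ℝ :=
  ![1, 20 / ((N : ℝ) + 1), 20 / ((N : ℝ) + 1), 20 / ((N : ℝ) + 1)]

/-- The diagonal block of the interpolation matrix is diagonal. -/
lemma Kblock_self_of_ne {N : ℕ} (hN : 20 ≤ N) {x : Mat3} (hx : IsSO3 x) {p q : Fin 4}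
    (h : q ≠ p) : Kblock 8 N p q x x = 0 := by
  obtain ⟨-, h1, h2, h3⟩ := block_diag hN hx
  fin_cases p <;> fin_cases q <;> simp_all [Kblock, toOp]

/-- Weighted row sum of an off-diagonal block column, scaled by the decay factor. -/
lemma row_block_bound {N : ℕ} (hN : 20 ≤ N) {x y : Mat3} (hx : IsSO3 x) (hy : IsSO3 y)
    (hD : (24 / ((N : ℝ) + 1)) ^ 2 ≤ 2 - 2 * cosAngle x y) (p : Fin 4) :
    gnorm 8 N * ∑ q, |Kblock 8 N p q x y * colWeight N q| ≤
      (if p = 0 then 1936 / ((N : ℝ) + 1) ^ 7 else 4472 / ((N : ℝ) + 1) ^ 6) *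
        ((2 - 2 * cosAngle x y) ^ 4)⁻¹ := by
  obtain ⟨h0, h1, h2, h3⟩ := block_bounds hN hx hy hD rfl
  have hk : 0 < (N : ℝ) + 1 := by positivity
  have hT : 0 < (2 - 2 * cosAngle x y) ^ 4 :=
    pow_pos (lt_of_lt_of_le (by positivity) hD) 4
  rw [← div_eq_mul_inv, le_div_iff₀ hT]
  have hw : 0 < 20 / ((N : ℝ) + 1) := by positivity
  set T := (2 - 2 * cosAngle x y) ^ 4
  set k := (N : ℝ) + 1
  set g := gnorm 8 N
  have hrow : ∀ (a A B : ℝ) (c : Fin 3 → ℝ), T * g * |a| ≤ A → (∀ j, T * g * |c j| ≤ B) →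
      g * (|a * 1| + |c 0 * (20 / k)| + |c 1 * (20 / k)| + |c 2 * (20 / k)|) * T ≤
        A + 3 * (20 / k) * B := by
    intro a A B c ha hc
    rw [abs_mul (c 0), abs_mul (c 1), abs_mul (c 2), abs_of_pos hw, mul_one]
    nlinarith [mul_le_mul_of_nonneg_right (hc 0) hw.le, mul_le_mul_of_nonneg_right (hc 1) hw.le,
      mul_le_mul_of_nonneg_right (hc 2) hw.le]
  have hzero : 16 / k ^ 7 + 3 * (20 / k) * (32 / k ^ 6) = 1936 / k ^ 7 := by field_simp; norm_num
  have hsucc : 32 / k ^ 6 + 3 * (20 / k) * (74 / k ^ 5) = 4472 / k ^ 6 := by field_simp; norm_num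
  rw [Fin.sum_univ_four]
  have hstep : ∀ i : Fin 3, _ := fun i => hsucc ▸ hrow _ _ _ _ (h2 i) (h3 i)
  fin_cases p
  · exact hzero ▸ hrow _ _ _ _ h0 h1
  · exact hstep 0
  · exact hstep 1
  · exact hstep 2

/-- The interpolation matrix of well-separated rotations is nonsingular. -/
lemma det_Kmat_ne_zero {N M : ℕ} (hN : 20 ≤ N) (x : Fin M → Mat3) (hx : ∀ a, IsSO3 (x a))
    (hsep : ∀ a b, a ≠ b → 36 / ((N : ℝ) + 1) ≤ rotAngle ((x b)⁻¹ * (x a))) :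
    (Kmat 8 N x).det ≠ 0 := by
  have hg := gnorm_pos hN
  have hk : 0 < (N : ℝ) + 1 := by positivity
  suffices h : (Kmat 8 N x * Matrix.diagonal fun qb : Fin 4 × Fin M => colWeight N qb.1).det ≠ 0 by
    rw [Matrix.det_mul] at h
    exact left_ne_zero_of_mul h
  refine det_ne_zero_of_sum_row_lt_diag fun pa => ?_
  obtain ⟨p, a⟩ := pa
  obtain ⟨hD, hS⟩ := separated_bounds hN x hx hsep a
  simp only [Matrix.mul_diagonal, Kmat, Matrix.of_apply, Real.norm_eq_abs]
  let F : Fin 4 × Fin M → ℝ := fun qb =>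
    |Kblock 8 N p qb.1 (x a) (x qb.2) * colWeight N qb.1|
  have hsum : ∑ qb ∈ Finset.univ.erase (p, a), F qb =
      ∑ b ∈ Finset.univ.erase a, ∑ q, F (q, b) := by
    have h1 := Finset.add_sum_erase Finset.univ F (Finset.mem_univ (p, a))
    have h2 := Finset.add_sum_erase Finset.univ (fun b => ∑ q, F (q, b)) (Finset.mem_univ a)
    have h3 : ∑ q, F (q, a) = F (p, a) := Fintype.sum_eq_single p fun q hq => by
      simp [F, Kblock_self_of_ne hN (hx a) hq]
    have h4 : ∑ qb, F qb = ∑ b, ∑ q, F (q, b) := Fintype.sum_prod_type_right F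
    simp only [h3] at h2
    linarith
  change ∑ qb ∈ Finset.univ.erase (p, a), F qb < F (p, a)
  rw [hsum]
  refine lt_of_mul_lt_mul_left (a := gnorm 8 N) ?_ hg.le
  set k := (N : ℝ) + 1 with hkdef
  have hoff : gnorm 8 N * ∑ b ∈ Finset.univ.erase a, ∑ q, F (q, b) ≤
      (if p = 0 then 1936 / k ^ 7 else 4472 / k ^ 6) * ((504 / 10 ^ 12) * k ^ 8) := by
    rw [Finset.mul_sum]
    refine (Finset.sum_le_sum fun b hb => row_block_bound hN (hx a) (hx b)
      (hD b (Finset.ne_of_mem_erase hb)) p).trans ?_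
    rw [← Finset.mul_sum]
    exact mul_le_mul_of_nonneg_left hS (by split_ifs <;> positivity)
  refine hoff.trans_lt ?_
  obtain ⟨d0, -, -, d3⟩ := block_diag hN (hx a)
  have hgl := gnorm_lower hN
  have hml := second_moment_lower hN
  rw [← hkdef, one_div, inv_mul_eq_div, le_div_iff₀ hk] at hgl hml
  by_cases hp : p = 0
  · subst hp
    have : F (0, a) = 1 := by simp [F, Kblock, toOp, d0, colWeight]
    rw [this, if_pos rfl]
    have e : 1936 / k ^ 7 * ((504 / 10 ^ 12) * k ^ 8) = 1936 * (504 / 10 ^ 12) * k := by field_simp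
    rw [e]
    linarith
  · rw [if_neg hp]
    set S := ∑ n ∈ Finset.Icc (-(N : ℤ)) N, (n : ℝ) ^ 2 * coeffG N n
    have hSpos : 0 < S := lt_of_lt_of_le (by positivity) hml
    have : gnorm 8 N * F (p, a) = S * (20 / k) := by
      have h : Kblock 8 N p p (x a) (x a) * colWeight N p = S / gnorm 8 N * (20 / k) := by
        fin_cases p <;> simp_all [Kblock, toOp, colWeight]
      simp only [F, h]
      rw [abs_of_pos (by positivity)]
      field_simp
    rw [this]
    have e : 4472 / k ^ 6 * ((504 / 10 ^ 12) * k ^ 8) = 4472 * (504 / 10 ^ 12) * k ^ 2 := by field_simp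
    rw [e]
    have e2 : 0.0511 * k ^ 2 / 322560 * k * (20 / k) = 0.0511 * k ^ 2 / 322560 * 20 := by
      field_simp
    have := mul_le_mul_of_nonneg_right hml (show 0 ≤ 20 / k by positivity)
    rw [e2] at this
    nlinarith [pow_pos hk 2]

theorem interpolation_problem_unique_solution
    (N : ℕ) (hN : 20 ≤ N)
    (M : ℕ) (x : Fin M → Mat3) (hx : ∀ a, IsSO3 (x a)) (hinj : Function.Injective x)
    (hsep : ∀ a b, a ≠ b → 36 / ((N : ℝ) + 1) ≤ rotAngle ((x b)⁻¹ * (x a))) :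
    IsUnit (Kmat 8 N x) ∧
    ∀ u : Fin M → ℝ, (∀ i, u i = 1 ∨ u i = -1) →
      ∃! α : Fin 4 × Fin M → ℝ, (Kmat 8 N x).mulVec α = rhsVec u := by

  have hdet : IsUnit (Kmat 8 N x).det := (det_Kmat_ne_zero hN x hx hsep).isUnit
  have hK : IsUnit (Kmat 8 N x) := (Matrix.isUnit_iff_isUnit_det _).2 hdet
  refine ⟨hK, fun u _ => ?_⟩
  exact Function.Bijective.existsUnique
    ⟨Matrix.mulVec_injective_iff_isUnit.2 hK, Matrix.mulVec_surjective_iff_isUnit.2 hK⟩ (rhsVec u)
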